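/- arXiv:gr-qc/0010008 — 7 statements merged into one kernel-verified Lean document; each statement's English description precedes it below -/
import Mathlib

section
/- For each fixed even integer m ≥ 2, the limit as N → ∞ along even integers of C₀(N,m+2)/C₀(N,m) exists and equals 6 · (1 − 1/(4m²))/(1 − 1/m) = (3/2)·(4m²−1)/(m(m−1)). -/
open Filter Real MeasureTheory

/-- Number of rooted quasitriangulations of a sphere with a hole with `N` triangles and
`m` boundary edges (Goulden–Jackson), with `j = (N - m)/2`. -/
noncomputable def C0 (N m : ℕ) : ℝ :=
  (2 : ℝ) ^ ((N - m) / 2 + 2) * (Nat.factorial (2 * m + 3 * ((N - m) / 2) - 1) : ℝ) *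
    (Nat.factorial (2 * m - 3) : ℝ) /
    ((Nat.factorial ((N - m) / 2 + 1) : ℝ) * (Nat.factorial (2 * m + 2 * ((N - m) / 2)) : ℝ) *
      ((Nat.factorial (m - 2) : ℝ)) ^ 2)

/-- The filter "N → ∞ along even integers". -/
def evenAtTop : Filter ℕ := Filter.atTop ⊓ Filter.principal {N | Even N}

lemma C0_ratio_aux (n k : ℕ) :
    C0 (n + 4 + 2 * k) (n + 2 + 2) / C0 (n + 4 + 2 * k) (n + 2) =
      (1 / 2) * (((2 * n + 7 : ℝ) + 3 * k) / ((2 * n + 8 : ℝ) + 2 * k)) *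
        (((2 : ℝ) + 1 * k) / ((2 * n + 7 : ℝ) + 2 * k)) *
        ((2 * n + 5) * (2 * n + 4) * (2 * n + 3) * (2 * n + 2) / ((n + 2) * (n + 1)) ^ 2) := by
  have e1 : (n + 4 + 2 * k - (n + 2 + 2)) / 2 = k := by omega
  have e2 : (n + 4 + 2 * k - (n + 2)) / 2 = k + 1 := by omega
  unfold C0
  rw [e1, e2]
  have a1 : 2 * (n + 2 + 2) + 3 * k - 1 = (2 * n + 3 * k + 6) + 1 := by omega
  have a2 : 2 * (n + 2) + 3 * (k + 1) - 1 = 2 * n + 3 * k + 6 := by omega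
  have a3 : 2 * (n + 2 + 2) - 3 = (2 * n + 1) + 1 + 1 + 1 + 1 := by omega
  have a4 : 2 * (n + 2) - 3 = 2 * n + 1 := by omega
  have a5 : 2 * (n + 2 + 2) + 2 * k = (2 * n + 2 * k + 6) + 1 + 1 := by omega
  have a6 : 2 * (n + 2) + 2 * (k + 1) = 2 * n + 2 * k + 6 := by omega
  have a7 : n + 2 + 2 - 2 = n + 1 + 1 := by omega
  have a8 : n + 2 - 2 = n := by omega
  rw [a1, a2, a3, a4, a5, a6, a7, a8]
  have f1 := (Nat.cast_ne_zero (R := ℝ)).2 (Nat.factorial_ne_zero (2 * n + 3 * k + 6))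
  have f2 := (Nat.cast_ne_zero (R := ℝ)).2 (Nat.factorial_ne_zero (2 * n + 1))
  have f3 := (Nat.cast_ne_zero (R := ℝ)).2 (Nat.factorial_ne_zero (2 * n + 2 * k + 6))
  have f4 := (Nat.cast_ne_zero (R := ℝ)).2 (Nat.factorial_ne_zero n)
  have f5 := (Nat.cast_ne_zero (R := ℝ)).2 (Nat.factorial_ne_zero (k + 1))
  rw [Nat.factorial_succ (k + 1), Nat.factorial_succ (2 * n + 3 * k + 6),
    Nat.factorial_succ (2 * n + 1 + 1 + 1 + 1), Nat.factorial_succ (2 * n + 1 + 1 + 1),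
    Nat.factorial_succ (2 * n + 1 + 1), Nat.factorial_succ (2 * n + 1),
    Nat.factorial_succ (2 * n + 2 * k + 6 + 1), Nat.factorial_succ (2 * n + 2 * k + 6),
    Nat.factorial_succ (n + 1), Nat.factorial_succ n]
  generalize ((2 * n + 3 * k + 6).factorial) = F1 at *
  generalize ((2 * n + 1).factorial) = F2 at *
  generalize ((2 * n + 2 * k + 6).factorial) = F3 at *
  generalize (n.factorial) = F4 at *
  generalize ((k + 1).factorial) = F5 at *
  push_cast
  have g1 : (2 * n + 8 : ℝ) + 2 * k ≠ 0 := by positivity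
  have g2 : (2 * n + 7 : ℝ) + 2 * k ≠ 0 := by positivity
  have g3 : (2 * n + 2 * k + 6 + 1 + 1: ℝ) ≠ 0 := by positivity
  have g4 : (2 * n + 2 * k + 6 + 1: ℝ) ≠ 0 := by positivity
  have g5 : (k + 1 + 1: ℝ) ≠ 0 := by positivity
  have g6 : (n + 1: ℝ) ≠ 0 := by positivity
  have g7 : (n + 1 + 1: ℝ) ≠ 0 := by positivity
  have g8 : (n + 2: ℝ) ≠ 0 := by positivity
  field_simp
  ring

lemma lin_ratio_tendsto (a b c d : ℝ) (hd : d ≠ 0) :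
    Tendsto (fun k : ℕ => (a + c * k) / (b + d * k)) atTop (nhds (c / d)) :=
  tendsto_add_mul_div_add_mul_atTop_nhds a b c hd

/-- For fixed even m ≥ 2, the one-step ratio tends to 6(1 - 1/(4m²))/(1 - 1/m). -/
theorem C0_ratio_limit (m : ℕ) (hm : Even m) (h2 : 2 ≤ m) :
    Filter.Tendsto (fun N : ℕ => C0 N (m + 2) / C0 N m) evenAtTop
      (nhds (6 * ((1 - 1 / (4 * (m : ℝ) ^ 2)) / (1 - 1 / (m : ℝ))))) ∧
    6 * ((1 - 1 / (4 * (m : ℝ) ^ 2)) / (1 - 1 / (m : ℝ))) =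
      (3 / 2) * (4 * (m : ℝ) ^ 2 - 1) / ((m : ℝ) * ((m : ℝ) - 1)) := by
  obtain ⟨n, rfl⟩ : ∃ n, m = n + 2 := ⟨m - 2, by omega⟩
  have hid : 6 * ((1 - 1 / (4 * ((n + 2 : ℕ) : ℝ) ^ 2)) / (1 - 1 / ((n + 2 : ℕ) : ℝ))) =
      (3 / 2) * (4 * ((n + 2 : ℕ) : ℝ) ^ 2 - 1) /
        (((n + 2 : ℕ) : ℝ) * (((n + 2 : ℕ) : ℝ) - 1)) := by
    push_cast
    have h1 : (n + 2 : ℝ) ≠ 0 := by positivity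
    have h3 : (n + 2 - 1 : ℝ) ≠ 0 := by
      have : (0 : ℝ) < n + 1 := by positivity
      linarith
    field_simp
    ring
  refine ⟨?_, hid⟩
  rw [hid]
  have hk : Tendsto (fun N : ℕ => (N - (n + 4)) / 2) evenAtTop atTop := by
    refine Tendsto.mono_left ?_ inf_le_left
    refine tendsto_atTop.2 fun b => ?_
    filter_upwards [eventually_ge_atTop (n + 4 + 2 * b)] with N hN
    omega
  have hlim := (((lin_ratio_tendsto (2 * n + 7) (2 * n + 8) 3 2 two_ne_zero).const_mul (1 / 2)).mul
    (lin_ratio_tendsto 2 (2 * n + 7) 1 2 two_ne_zero)).mul_const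
    (((2 * n + 5) * (2 * n + 4) * (2 * n + 3) * (2 * n + 2) / ((n + 2) * (n + 1)) ^ 2 : ℝ))
  have hc := hlim.comp hk
  have hval : (1 / 2 * (3 / 2) * (1 / 2) *
      ((2 * n + 5) * (2 * n + 4) * (2 * n + 3) * (2 * n + 2) / ((n + 2) * (n + 1)) ^ 2) : ℝ) =
      (3 / 2) * (4 * ((n + 2 : ℕ) : ℝ) ^ 2 - 1) /
        (((n + 2 : ℕ) : ℝ) * (((n + 2 : ℕ) : ℝ) - 1)) := by
    push_cast
    have h1 : (n + 2 : ℝ) ≠ 0 := by positivity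
    have h3 : (n + 1 : ℝ) ≠ 0 := by positivity
    have h4 : (n + 2 - 1 : ℝ) = n + 1 := by ring
    rw [h4]
    field_simp
    ring
  rw [hval] at hc
  refine hc.congr' ?_
  have hev : ∀ᶠ N in evenAtTop, n + 4 ≤ N ∧ Even N :=
    ((eventually_ge_atTop (n + 4)).filter_mono inf_le_left).and
      ((eventually_principal.2 fun _ h => h).filter_mono inf_le_right)
  filter_upwards [hev] with N hN
  obtain ⟨h, a, ha⟩ := hN
  obtain ⟨b, hb⟩ := hm
  have hN' : N = n + 4 + 2 * ((N - (n + 4)) / 2) := by omega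
  have := C0_ratio_aux n ((N - (n + 4)) / 2)
  rw [← hN'] at this
  rw [this]
  rfl
end

section
/- For each fixed even integer m ≥ 2, the limit as N → ∞ along even integers of C₀(N+2,m)/C₀(N,m) exists and equals 27/2; consequently (1/N)·log C₀(N,m) converges to (1/2)·log(27/2) = log(3·√(3/2)) as N → ∞ along even integers. -/
open Filter Real MeasureTheory

lemma C0_aux_pos (N m : ℕ) : 0 < C0 N m := by
  unfold C0; positivity

lemma C0_aux_transfer (m : ℕ) (hm : Even m) (f : ℕ → ℝ) (l : Filter ℝ)
    (h : Filter.Tendsto (fun j : ℕ => f (m + 2 * j)) Filter.atTop l) :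
    Filter.Tendsto f evenAtTop l := by
  have hg : Filter.Tendsto (fun N : ℕ => (N - m) / 2) evenAtTop Filter.atTop := by
    unfold evenAtTop
    refine Filter.Tendsto.mono_left ?_ inf_le_left
    refine Filter.tendsto_atTop.2 fun b => ?_
    filter_upwards [Filter.eventually_ge_atTop (m + 2 * b)] with N hN
    omega
  refine (h.comp hg).congr' ?_
  unfold evenAtTop
  rw [Filter.EventuallyEq, Filter.eventually_inf_principal]
  filter_upwards [Filter.eventually_ge_atTop m] with N hN hE
  have hE : Even N := hE
  have : m + 2 * ((N - m) / 2) = N := by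
    obtain ⟨a, ha⟩ := hm
    obtain ⟨b, hb⟩ := hE
    omega
  simp only [Function.comp, this]

lemma C0_aux_ratio (m : ℕ) (h2 : 2 ≤ m) (j : ℕ) :
    C0 (m + 2 * j + 2) m / C0 (m + 2 * j) m =
      2 * ((2 * m + 3 * j : ℝ) * (2 * m + 3 * j + 1) * (2 * m + 3 * j + 2)) /
        ((j + 2) * (2 * m + 2 * j + 1) * (2 * m + 2 * j + 2)) := by
  obtain ⟨k, rfl⟩ : ∃ k, m = k + 2 := ⟨m - 2, by omega⟩
  unfold C0
  have e1 : (k + 2 + 2 * j + 2 - (k + 2)) / 2 = j + 1 := by omega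
  have e2 : (k + 2 + 2 * j - (k + 2)) / 2 = j := by omega
  rw [e1, e2]
  have e3 : 2 * (k + 2) + 3 * (j + 1) - 1 = (2 * k + 3 * j + 3) + 1 + 1 + 1 := by omega
  have e4 : 2 * (k + 2) + 3 * j - 1 = 2 * k + 3 * j + 3 := by omega
  have e5 : 2 * (k + 2) + 2 * (j + 1) = (2 * k + 2 * j + 4) + 1 + 1 := by omega
  have e6 : 2 * (k + 2) + 2 * j = 2 * k + 2 * j + 4 := by omega
  rw [e3, e4, e5, e6]
  have p1 : (Nat.factorial (2 * k + 3 * j + 3) : ℝ) ≠ 0 := by positivity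
  have p2 : (Nat.factorial (2 * k + 2 * j + 4) : ℝ) ≠ 0 := by positivity
  have p3 : (Nat.factorial (j + 1) : ℝ) ≠ 0 := by positivity
  have p4 : (Nat.factorial (2 * (k + 2) - 3) : ℝ) ≠ 0 := by positivity
  have p5 : (Nat.factorial (k + 2 - 2) : ℝ) ≠ 0 := by positivity
  rw [Nat.factorial_succ (2 * k + 3 * j + 3 + 1 + 1), Nat.factorial_succ (2 * k + 3 * j + 3 + 1),
    Nat.factorial_succ (2 * k + 3 * j + 3), Nat.factorial_succ (2 * k + 2 * j + 4 + 1),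
    Nat.factorial_succ (2 * k + 2 * j + 4), Nat.factorial_succ (j + 1)]
  generalize Nat.factorial (2 * k + 3 * j + 3) = A at *
  generalize Nat.factorial (2 * k + 2 * j + 4) = B at *
  generalize Nat.factorial (j + 1) = D at *
  generalize Nat.factorial (2 * (k + 2) - 3) = E at *
  generalize Nat.factorial (k + 2 - 2) = F at *
  push_cast
  have q1 : (j + 1 + 1 : ℝ) ≠ 0 := by positivity
  have q2 : (j + 2 : ℝ) ≠ 0 := by positivity
  have q3 : (2 * k + 2 * j + 4 + 1 : ℝ) ≠ 0 := by positivity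
  have q4 : (2 * k + 2 * j + 4 + 1 + 1 : ℝ) ≠ 0 := by positivity
  have q5 : (2 * (k + 2) + 2 * j + 1 : ℝ) ≠ 0 := by positivity
  have q6 : (2 * (k + 2) + 2 * j + 2 : ℝ) ≠ 0 := by positivity
  rw [div_div_div_eq, div_eq_div_iff (by positivity) (by positivity)]
  ring

lemma C0_aux_lim (a b : ℝ) (c : ℝ) :
    Filter.Tendsto (fun j : ℕ => (a + b * (j : ℝ)) / (j + c)) Filter.atTop (nhds b) := by
  have h0 := tendsto_inv_atTop_nhds_zero_nat (𝕜 := ℝ)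
  have h : Filter.Tendsto (fun j : ℕ => (a * (j : ℝ)⁻¹ + b) / (1 + c * (j : ℝ)⁻¹))
      Filter.atTop (nhds ((a * 0 + b) / (1 + c * 0))) :=
    ((h0.const_mul a).add_const b).div ((h0.const_mul c).const_add 1) (by norm_num)
  simp only [mul_zero, zero_add, add_zero, div_one] at h
  refine h.congr' ?_
  filter_upwards [Filter.eventually_gt_atTop 0] with j hj
  have hj' : (j : ℝ) ≠ 0 := by positivity
  rw [← mul_div_mul_right _ _ hj']
  congr 1 <;> field_simp

lemma C0_aux_ratio_lim (m : ℕ) (h2 : 2 ≤ m) :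
    Filter.Tendsto (fun j : ℕ => C0 (m + 2 * j + 2) m / C0 (m + 2 * j) m) Filter.atTop
      (nhds (27 / 2 : ℝ)) := by
  have h := (((C0_aux_lim (2 * m) 3 2).mul (C0_aux_lim (2 * m + 1) 3 (m + 1 / 2))).mul
    (C0_aux_lim (2 * m + 2) 3 (m + 1))).const_mul (1 / 2)
  rw [show (1 / 2 * (3 * 3 * 3) : ℝ) = 27 / 2 by norm_num] at h
  refine h.congr fun j => ?_
  rw [C0_aux_ratio m h2 j]
  have q2 : (j + 2 : ℝ) ≠ 0 := by positivity
  have q5 : (j + (m + 1 / 2) : ℝ) ≠ 0 := by positivity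
  have q6 : (j + (m + 1) : ℝ) ≠ 0 := by positivity
  have q7 : (2 * m + 2 * j + 1 : ℝ) ≠ 0 := by positivity
  have q8 : (2 * m + 2 * j + 2 : ℝ) ≠ 0 := by positivity
  rw [div_mul_div_comm, div_mul_div_comm, ← mul_div_assoc,
    div_eq_div_iff (by positivity) (by positivity)]
  ring

lemma C0_aux_log_lim (m : ℕ) (h2 : 2 ≤ m) :
    Filter.Tendsto (fun j : ℕ => (1 / ((m + 2 * j : ℕ) : ℝ)) * Real.log (C0 (m + 2 * j) m))
      Filter.atTop (nhds ((1 / 2) * Real.log (27 / 2))) := by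
  have h1 := ((C0_aux_ratio_lim m h2).log (by norm_num)).cesaro
  have hs : ∀ n : ℕ, ∑ i ∈ Finset.range n,
      Real.log (C0 (m + 2 * i + 2) m / C0 (m + 2 * i) m) =
      Real.log (C0 (m + 2 * n) m) - Real.log (C0 m m) := by
    intro n
    have := Finset.sum_range_sub (fun i => Real.log (C0 (m + 2 * i) m)) n
    simp only [mul_zero, add_zero] at this
    rw [← this]
    refine Finset.sum_congr rfl fun i _ => ?_
    rw [Real.log_div (C0_aux_pos _ _).ne' (C0_aux_pos _ _).ne']
    rfl
  simp only [hs] at h1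
  have h0 := tendsto_inv_atTop_nhds_zero_nat (𝕜 := ℝ)
  have h3 := h1.add (h0.mul_const (Real.log (C0 m m)))
  have h4 := (C0_aux_lim 0 (1 / 2) (m / 2)).mul h3
  rw [zero_mul, add_zero] at h4
  refine h4.congr' ?_
  filter_upwards [Filter.eventually_gt_atTop 0] with j hj
  have hj' : (j : ℝ) ≠ 0 := by positivity
  have hm' : (m + 2 * j : ℝ) ≠ 0 := by positivity
  have hm'' : (j + m / 2 : ℝ) ≠ 0 := by positivity
  push_cast
  have : (0 + 1 / 2 * (j : ℝ)) / (j + m / 2) = j * (1 / (m + 2 * j)) := by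
    rw [← mul_div_assoc, div_eq_div_iff hm'' hm']; ring
  rw [this]
  field_simp
  ring

/-- For fixed even m ≥ 2: C₀(N+2,m)/C₀(N,m) → 27/2 and (1/N) log C₀(N,m) → (1/2) log(27/2)
along even N → ∞. -/
theorem C0_growth_rate (m : ℕ) (hm : Even m) (h2 : 2 ≤ m) :
    Filter.Tendsto (fun N : ℕ => C0 (N + 2) m / C0 N m) evenAtTop (nhds (27 / 2 : ℝ)) ∧
    Filter.Tendsto (fun N : ℕ => (1 / (N : ℝ)) * Real.log (C0 N m)) evenAtTop
      (nhds ((1 / 2) * Real.log (27 / 2))) ∧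
    (1 / 2 : ℝ) * Real.log (27 / 2) = Real.log (3 * Real.sqrt (3 / 2)) := by
  refine ⟨C0_aux_transfer m hm _ _ (C0_aux_ratio_lim m h2),
    C0_aux_transfer m hm _ _ (C0_aux_log_lim m h2), ?_⟩
  have : (27 / 2 : ℝ) = (3 * Real.sqrt (3 / 2)) ^ 2 := by
    rw [mul_pow, Real.sq_sqrt (by norm_num)]; norm_num
  rw [this, Real.log_pow]
  push_cast
  ring
end

section
/- For each fixed even integer m ≥ 2 there exists a constant φ(m) ∈ (0, ∞) such that C₀(N,m) · N^(5/2) · (27/2)^(−N/2) → φ(m) as N → ∞ along even integers; i.e. C₀(N,m) ∼ φ(m) · N^(−5/2) · c^N with c = 3·√(3/2). -/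
open Filter Real MeasureTheory

lemma aux_shift (c : ℕ) (hc : 0 < c) (a : ℕ) :
    Tendsto (fun j : ℕ => ((c * j + a).factorial : ℝ) / (((c * j).factorial : ℝ) * (j : ℝ) ^ a))
      atTop (nhds ((c : ℝ) ^ a)) := by
  induction a with
  | zero =>
    refine Tendsto.congr (f₁ := fun _ => (1 : ℝ)) ?_ (by simp)
    intro j
    have : ((c * j).factorial : ℝ) ≠ 0 := by positivity
    simp [this]
  | succ a ih =>
    have h1 : Tendsto (fun j : ℕ => (c : ℝ) + ((a : ℝ) + 1) / (j : ℝ)) atTop (nhds (c : ℝ)) := by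
      simpa using (tendsto_const_nhds (x := (c : ℝ))).add
        (tendsto_const_div_atTop_nhds_zero_nat ((a : ℝ) + 1))
    have h2 := ih.mul h1
    rw [pow_succ]
    refine h2.congr' ?_
    filter_upwards [eventually_gt_atTop 0] with j hj
    have hj' : (j : ℝ) ≠ 0 := by positivity
    have : ((c * j).factorial : ℝ) ≠ 0 := by positivity
    rw [← add_assoc, Nat.factorial_succ]
    push_cast
    field_simp
    ring

lemma aux_fact (n : ℕ) (hn : 0 < n) :
    (n.factorial : ℝ) = Stirling.stirlingSeq n * (√(2 * n) * (n / exp 1) ^ n) := by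
  unfold Stirling.stirlingSeq
  have : √(2 * (n : ℝ)) * (n / exp 1) ^ n ≠ 0 := by positivity
  field_simp

lemma aux_binom : Tendsto (fun j : ℕ => ((3 * j).factorial : ℝ) /
      ((j.factorial : ℝ) * ((2 * j).factorial : ℝ)) * √(j : ℝ) * (4 / 27 : ℝ) ^ j)
      atTop (nhds (√π / (√π * √π) * (√6 / (√2 * √4)))) := by
  have hs := Stirling.tendsto_stirlingSeq_sqrt_pi
  have h3 : Tendsto (fun j : ℕ => 3 * j) atTop atTop :=
    tendsto_id.const_mul_atTop' (by norm_num)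
  have h2 : Tendsto (fun j : ℕ => 2 * j) atTop atTop :=
    tendsto_id.const_mul_atTop' (by norm_num)
  have hpi : √π * √π ≠ 0 := by positivity
  have := ((hs.comp h3).div (hs.mul (hs.comp h2)) hpi).mul_const (√6 / (√2 * √4))
  refine this.congr' ?_
  filter_upwards [eventually_gt_atTop 0] with j hj
  have hjr : (0 : ℝ) < j := by positivity
  have p1 : Stirling.stirlingSeq j ≠ 0 := by
    unfold Stirling.stirlingSeq; positivity
  have p2 : Stirling.stirlingSeq (2 * j) ≠ 0 := by
    unfold Stirling.stirlingSeq; positivity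
  rw [aux_fact j hj, aux_fact (2 * j) (by omega), aux_fact (3 * j) (by omega)]
  simp only [Function.comp, Pi.div_apply]
  have e6 : √(2 * ((3 * j : ℕ) : ℝ)) = √6 * √j := by
    rw [← Real.sqrt_mul (by norm_num)]; push_cast; ring_nf
  have e4 : √(2 * ((2 * j : ℕ) : ℝ)) = √4 * √j := by
    rw [← Real.sqrt_mul (by norm_num)]; push_cast; ring_nf
  have e2 : √(2 * (j : ℝ)) = √2 * √j := Real.sqrt_mul (by norm_num) _
  have q3 : (((3 * j : ℕ) : ℝ) / exp 1) ^ (3 * j) = 27 ^ j * (((j : ℝ) / exp 1) ^ j) ^ 3 := by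
    push_cast
    rw [mul_div_assoc, mul_pow, pow_mul, pow_mul, ← pow_mul, ← pow_mul, ← pow_mul, mul_comm j 3,
      pow_mul 3 3 j]
    norm_num
  have q2 : (((2 * j : ℕ) : ℝ) / exp 1) ^ (2 * j) = 4 ^ j * (((j : ℝ) / exp 1) ^ j) ^ 2 := by
    push_cast
    rw [mul_div_assoc, mul_pow, pow_mul, pow_mul, ← pow_mul, ← pow_mul, ← pow_mul, mul_comm j 2,
      pow_mul 2 2 j]
    norm_num
  rw [e6, e4, e2, q3, q2]
  have hx : ((j : ℝ) / exp 1) ^ j ≠ 0 := by positivity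
  generalize ((j : ℝ) / exp 1) ^ j = x at *
  have hsq : √(j : ℝ) ≠ 0 := by positivity
  generalize √(j : ℝ) = y at *
  field_simp
  rw [mul_assoc, ← mul_pow]
  norm_num

lemma aux_even (m : ℕ) (hm : Even m) : evenAtTop ≤ map (fun j : ℕ => m + 2 * j) atTop := by
  intro s hs
  rw [mem_map, mem_atTop_sets] at hs
  obtain ⟨J, hJ⟩ := hs
  unfold evenAtTop
  rw [mem_inf_principal]
  filter_upwards [eventually_ge_atTop (m + 2 * J)] with N hN hE
  obtain ⟨a, ha⟩ := hm
  obtain ⟨b, hb⟩ := hE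
  have := hJ (b - a) (by omega)
  simp only [Set.mem_preimage] at this
  convert this using 1
  omega

theorem C0_asymptotics (m : ℕ) (hm : Even m) (h2 : 2 ≤ m) :
    ∃ φ : ℝ, 0 < φ ∧
      Filter.Tendsto
        (fun N : ℕ => C0 N m * (N : ℝ) ^ ((5 : ℝ) / 2) * (27 / 2 : ℝ) ^ (-(N : ℝ) / 2))
        evenAtTop (nhds φ) := by
  set K : ℝ := 4 * ((2 * m - 3).factorial : ℝ) / ((m - 2).factorial : ℝ) ^ 2 *
    (27 / 2 : ℝ) ^ (-(m : ℝ) / 2) with hK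
  have hKpos : 0 < K := by positivity
  have hB := aux_binom
  have hP := aux_shift 3 (by norm_num) (2 * m - 1)
  have hQ := aux_shift 2 (by norm_num) (2 * m)
  have hR := aux_shift 1 (by norm_num) 1
  have hT0 : Tendsto (fun j : ℕ => (m : ℝ) / (j : ℝ) + 2) atTop (nhds 2) := by
    simpa using (tendsto_const_div_atTop_nhds_zero_nat (m : ℝ)).add_const 2
  have hT := hT0.rpow_const (p := (5 : ℝ) / 2) (Or.inl (by norm_num))
  have hall := ((((hB.mul hP).div hQ (by positivity)).div hR (by positivity)).mul hT).const_mul K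
  refine ⟨_, ?_, (tendsto_map'_iff.2 (hall.congr' ?_)).mono_left (aux_even m hm)⟩
  · positivity
  filter_upwards [eventually_gt_atTop 0] with j hj
  have hjr : (0 : ℝ) < j := by positivity
  have hjm : (m + 2 * j - m) / 2 = j := by omega
  simp only [Function.comp, Pi.div_apply, C0, hjm, one_mul]
  have hN : ((m + 2 * j : ℕ) : ℝ) ^ ((5 : ℝ) / 2) =
      ((m : ℝ) / j + 2) ^ ((5 : ℝ) / 2) * ((j : ℝ) ^ 2 * √(j : ℝ)) := by
    have e : ((m + 2 * j : ℕ) : ℝ) = ((m : ℝ) / j + 2) * j := by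
      push_cast; field_simp
    rw [e, Real.mul_rpow (by positivity) hjr.le]
    congr 1
    rw [show (5 : ℝ) / 2 = (2 : ℕ) + 1 / 2 by norm_num, Real.rpow_add hjr, Real.rpow_natCast,
      Real.sqrt_eq_rpow]
  have hE : (27 / 2 : ℝ) ^ (-((m + 2 * j : ℕ) : ℝ) / 2) =
      (27 / 2 : ℝ) ^ (-(m : ℝ) / 2) * (2 / 27 : ℝ) ^ j := by
    rw [show -((m + 2 * j : ℕ) : ℝ) / 2 = -(m : ℝ) / 2 + -(j : ℝ) by push_cast; ring,
      Real.rpow_add (by norm_num), Real.rpow_neg (by norm_num) (j : ℝ), Real.rpow_natCast,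
      ← inv_pow]
    norm_num
  have h4 : (4 / 27 : ℝ) ^ j = 2 ^ j * (2 / 27 : ℝ) ^ j := by
    rw [← mul_pow]; norm_num
  rw [hN, hE, h4, hK, show 2 * m + 3 * j - 1 = 3 * j + (2 * m - 1) by omega,
    show 2 * m + 2 * j = 2 * j + 2 * m by omega]
  obtain ⟨d, hd⟩ : ∃ d, 2 * m = d + 1 := ⟨2 * m - 1, by omega⟩
  have hd' : 2 * m - 1 = d := by omega
  rw [hd', hd]
  have f1 : ((3 * j).factorial : ℝ) ≠ 0 := by positivity
  have f2 : ((2 * j).factorial : ℝ) ≠ 0 := by positivity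
  have f3 : (j.factorial : ℝ) ≠ 0 := by positivity
  have f4 : ((j + 1).factorial : ℝ) ≠ 0 := by positivity
  have f5 : ((2 * j + (d + 1)).factorial : ℝ) ≠ 0 := by positivity
  have f6 : ((m - 2).factorial : ℝ) ≠ 0 := by positivity
  generalize (27 / 2 : ℝ) ^ (-(m : ℝ) / 2) = u
  generalize (2 / 27 : ℝ) ^ j = v
  generalize ((m : ℝ) / j + 2) ^ ((5 : ℝ) / 2) = w
  generalize √(j : ℝ) = y
  rw [pow_add (2 : ℝ) j 2]
  field_simp
  try ring
end

section
/- For every β ∈ (0,1), the limit as N → ∞ along even integers of (1/N)·log C₀(N, 2⌊βN/2⌋) exists and equals (1/2)·log(27/2) + (β/2)·log 6 + (1/2)·∫₀^β log h(t) dt, where h(t) = (1 + 4t/(3(1−t)))/(1 + 2t/(1−t))². (In particular at β = 1 this expression equals log 4, the exponential growth rate of C₀(N,N).) -/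
open Filter Real MeasureTheory

/-- h(t) = (1 + 4t/(3(1-t)))/(1 + 2t/(1-t))². -/
noncomputable def h (t : ℝ) : ℝ := (1 + 4 * t / (3 * (1 - t))) / (1 + 2 * t / (1 - t)) ^ 2

open scoped Topology

lemma aux_log_fact : Tendsto (fun n : ℕ => Real.log (Nat.factorial n) / n - Real.log n) atTop (𝓝 (-1)) := by
  have h1 : Tendsto (fun n : ℕ => Real.log (Stirling.stirlingSeq n)) atTop (𝓝 (Real.log (√π))) :=
    (Stirling.tendsto_stirlingSeq_sqrt_pi).log (by positivity)
  have h2 : Tendsto (fun n : ℕ => (1 : ℝ) / n) atTop (𝓝 0) := tendsto_one_div_atTop_nhds_zero_nat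
  have h3 : Tendsto (fun n : ℕ => Real.log (n : ℝ) / n) atTop (𝓝 0) :=
    (Real.isLittleO_log_id_atTop.tendsto_div_nhds_zero).comp tendsto_natCast_atTop_atTop
  have h4 := ((h1.mul h2).add ((h3.add (h2.const_mul (Real.log 2))).const_mul (1 / 2))).sub_const 1
  have e : Real.log (√π) * 0 + 1 / 2 * (0 + Real.log 2 * 0) - 1 = -1 := by ring
  rw [e] at h4
  refine h4.congr' ?_
  filter_upwards [eventually_gt_atTop 0] with n hn
  have hn' : (n : ℝ) ≠ 0 := by positivity
  rw [Stirling.log_stirlingSeq_formula, Real.log_mul (by norm_num) hn',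
    Real.log_div hn' (Real.exp_ne_zero _), Real.log_exp]
  field_simp
  ring

lemma aux_seq (a : ℕ → ℕ) (c : ℝ) (hc : 0 < c)
    (ha : Tendsto (fun N : ℕ => (a N : ℝ) / N) atTop (𝓝 c)) :
    Tendsto (fun N : ℕ => (Real.log (Nat.factorial (a N)) - a N * Real.log N) / N) atTop
      (𝓝 (c * Real.log c - c)) := by
  have hinf : Tendsto a atTop atTop := by
    have : Tendsto (fun N : ℕ => (a N : ℝ)) atTop atTop := by
      refine (ha.pos_mul_atTop hc tendsto_natCast_atTop_atTop).congr' ?_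
      filter_upwards [eventually_gt_atTop 0] with n hn
      have hn' : (n : ℝ) ≠ 0 := by positivity
      field_simp
    exact tendsto_natCast_atTop_iff.1 this
  have h1 := (ha.mul (aux_log_fact.comp hinf)).add (ha.mul (ha.log hc.ne'))
  have e : c * -1 + c * Real.log c = c * Real.log c - c := by ring
  rw [e] at h1
  refine h1.congr' ?_
  filter_upwards [eventually_gt_atTop 0, hinf.eventually_gt_atTop 0] with n hn han
  have hn' : (n : ℝ) ≠ 0 := by positivity
  have han' : (a n : ℝ) ≠ 0 := by positivity
  simp only [Function.comp]
  rw [Real.log_div han' hn']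
  field_simp
  ring

lemma aux_h (t : ℝ) (h0 : 0 ≤ t) (h1 : t < 1) :
    Real.log (h t) = Real.log (3 + t) + Real.log (1 - t) - Real.log 3 - 2 * Real.log (1 + t) := by
  have a1 : (1 - t) ≠ 0 := by linarith
  have a2 : (1 + t) ≠ 0 := by linarith
  have a3 : (3 + t) ≠ 0 := by linarith
  have e : h t = (3 + t) * (1 - t) / 3 / (1 + t) ^ 2 := by
    have e1 : 1 + 4 * t / (3 * (1 - t)) = (3 + t) / (3 * (1 - t)) := by field_simp; ring
    have e2 : 1 + 2 * t / (1 - t) = (1 + t) / (1 - t) := by field_simp; ring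
    rw [h, e1, e2]
    field_simp
  rw [e, Real.log_div (by positivity) (by positivity), Real.log_div (by positivity) (by positivity),
    Real.log_mul a3 a1, Real.log_pow]
  push_cast; ring

lemma aux_int (β : ℝ) (h0 : 0 < β) (h1 : β ≤ 1) :
    (1 / 2) * Real.log (27 / 2) + (β / 2) * Real.log 6 +
          (1 / 2) * ∫ t in (0 : ℝ)..β, Real.log (h t) =
    (1 - β) / 2 * Real.log 2 + 2 * β * Real.log 2 + (3 + β) / 2 * Real.log ((3 + β) / 2)
      - (1 - β) / 2 * Real.log ((1 - β) / 2) - (1 + β) * Real.log (1 + β) := by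
  have e1 : ∫ t in (0 : ℝ)..β, Real.log (h t) =
      ∫ t in (0 : ℝ)..β, (Real.log (3 + t) + Real.log (1 - t) - Real.log 3 - 2 * Real.log (1 + t)) := by
    apply intervalIntegral.integral_congr_ae
    have : ∀ᵐ t : ℝ, t ≠ 1 := by simp [ae_iff]
    filter_upwards [this] with t ht hm
    rw [Set.uIoc_of_le h0.le] at hm
    exact aux_h t hm.1.le (lt_of_le_of_ne (hm.2.trans h1) ht)
  have e2 := intervalIntegral.integral_eq_sub_of_hasDerivAt_of_le (a := 0) (b := β)
    (f := fun t => (3 + t) * Real.log (3 + t) - (1 - t) * Real.log (1 - t)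
      - 2 * ((1 + t) * Real.log (1 + t)) - t * Real.log 3)
    (f' := fun t => (Real.log (3 + t) + Real.log (1 - t) - Real.log 3 - 2 * Real.log (1 + t)))
    h0.le ?_ ?_ ?_
  · rw [e1, e2]
    have l27 : Real.log (27 / 2) = 3 * Real.log 3 - Real.log 2 := by
      rw [Real.log_div (by norm_num) (by norm_num), show (27 : ℝ) = 3 ^ 3 by norm_num, Real.log_pow]
      push_cast; ring
    have l6 : Real.log 6 = Real.log 2 + Real.log 3 := by
      rw [← Real.log_mul (by norm_num) (by norm_num)]; norm_num
    have l3 : Real.log ((3 + β) / 2) = Real.log (3 + β) - Real.log 2 :=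
      Real.log_div (by positivity) (by norm_num)
    have l1 : (1 - β) / 2 * Real.log ((1 - β) / 2) =
        (1 - β) / 2 * (Real.log (1 - β) - Real.log 2) := by
      rcases eq_or_lt_of_le h1 with rfl | hlt
      · simp
      · rw [Real.log_div (by linarith) (by norm_num)]
    rw [l27, l6, l3, l1]
    simp
    ring
  · have hg := Real.continuous_mul_log
    have g1 : Continuous fun t : ℝ => (3 + t) * Real.log (3 + t) :=
      hg.comp (continuous_const.add continuous_id)
    have g2 : Continuous fun t : ℝ => (1 - t) * Real.log (1 - t) :=
      hg.comp (continuous_const.sub continuous_id)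
    have g3 : Continuous fun t : ℝ => (1 + t) * Real.log (1 + t) :=
      hg.comp (continuous_const.add continuous_id)
    apply Continuous.continuousOn
    fun_prop
  · intro t ht
    have k1 : (1 - t) ≠ 0 := by linarith [ht.2]
    have k2 : (1 + t) ≠ 0 := by linarith [ht.1]
    have k3 : (3 + t) ≠ 0 := by linarith [ht.1]
    have d1 := (Real.hasDerivAt_mul_log k3).comp t ((hasDerivAt_id t).const_add 3)
    have d2 := (Real.hasDerivAt_mul_log k1).comp t ((hasDerivAt_id t).const_sub 1)
    have d3 := (Real.hasDerivAt_mul_log k2).comp t ((hasDerivAt_id t).const_add 1)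
    have d := ((d1.sub d2).sub (d3.const_mul 2)).sub ((hasDerivAt_id t).mul_const (Real.log 3))
    refine HasDerivAt.congr_deriv (f := fun t => (3 + t) * Real.log (3 + t) -
      (1 - t) * Real.log (1 - t) - 2 * ((1 + t) * Real.log (1 + t)) - t * Real.log 3) d ?_
    ring
  · have i0 : ∀ a b : ℝ, IntervalIntegrable Real.log volume a b := fun a b =>
      intervalIntegral.intervalIntegrable_log'
    have i1 : IntervalIntegrable (fun t : ℝ => Real.log (3 + t)) volume 0 β := by
      have := (i0 (3 + 0) (3 + β)).comp_add_left 3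
      simpa using this
    have i2 : IntervalIntegrable (fun t : ℝ => Real.log (1 - t)) volume 0 β := by
      have := (i0 (1 - 0) (1 - β)).comp_sub_left 1
      simpa using this
    have i3 : IntervalIntegrable (fun t : ℝ => Real.log (1 + t)) volume 0 β := by
      have := (i0 (1 + 0) (1 + β)).comp_add_left 1
      simpa using this
    exact ((i1.add i2).sub intervalIntegrable_const).sub (i3.const_mul 2)

lemma aux_lim (β : ℝ) (h0 : 0 < β) (h1 : β < 1) :
    Tendsto (fun N : ℕ => (1 / (N : ℝ)) * Real.log (C0 N (2 * ⌊β * N / 2⌋₊))) atTop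
    (𝓝 ((1 - β) / 2 * Real.log 2 + 2 * β * Real.log 2 + (3 + β) / 2 * Real.log ((3 + β) / 2)
      - (1 - β) / 2 * Real.log ((1 - β) / 2) - (1 + β) * Real.log (1 + β))) := by
  obtain ⟨m, hm⟩ : ∃ m : ℕ → ℕ, ∀ N : ℕ, m N = 2 * ⌊β * N / 2⌋₊ := ⟨_, fun _ => rfl⟩
  obtain ⟨j, hj⟩ : ∃ j : ℕ → ℕ, ∀ N : ℕ, j N = (N - m N) / 2 := ⟨_, fun _ => rfl⟩
  have hz : Tendsto (fun n : ℕ => (1 : ℝ) / n) atTop (𝓝 0) := tendsto_one_div_atTop_nhds_zero_nat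
  have hl : Tendsto (fun n : ℕ => Real.log (n : ℝ) / n) atTop (𝓝 0) :=
    (Real.isLittleO_log_id_atTop.tendsto_div_nhds_zero).comp tendsto_natCast_atTop_atTop
  have hmN : Tendsto (fun N : ℕ => (m N : ℝ) / N) atTop (𝓝 β) := by
    have := ((tendsto_nat_floor_mul_div_atTop (R := ℝ) (a := β / 2) (by positivity)).comp
      tendsto_natCast_atTop_atTop).const_mul 2
    rw [show 2 * (β / 2) = β by ring] at this
    refine this.congr fun N => ?_
    simp only [Function.comp, hm]
    rw [show β * (N : ℝ) / 2 = β / 2 * N by ring]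
    push_cast; ring
  have hmle : ∀ N, m N ≤ N := by
    intro N
    have : (m N : ℝ) ≤ N := by
      rw [hm]; push_cast
      have := Nat.floor_le (a := β * N / 2) (by positivity)
      nlinarith [(Nat.cast_nonneg N : (0 : ℝ) ≤ N)]
    exact_mod_cast this
  have hjN : Tendsto (fun N : ℕ => (j N : ℝ) / N) atTop (𝓝 ((1 - β) / 2)) := by
    have hu : Tendsto (fun N : ℕ => (1 - (m N : ℝ) / N) / 2) atTop (𝓝 ((1 - β) / 2)) :=
      (hmN.const_sub 1).div_const 2
    have hlo := hu.sub hz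
    rw [sub_zero] at hlo
    refine tendsto_of_tendsto_of_tendsto_of_le_of_le' hlo hu ?_ ?_
    · filter_upwards [eventually_gt_atTop 0] with N hN
      have hN' : (0 : ℝ) < N := by positivity
      have : N ≤ 2 * j N + 1 + m N := by have := hj N; have := hmle N; omega
      have : (N : ℝ) ≤ 2 * j N + 1 + m N := by exact_mod_cast this
      have e : (1 - (m N : ℝ) / N) / 2 - 1 / N = ((N - m N) / 2 - 1) / N := by field_simp
      rw [e]
      gcongr
      linarith
    · filter_upwards [eventually_gt_atTop 0] with N hN
      have hN' : (0 : ℝ) < N := by positivity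
      have : 2 * j N + m N ≤ N := by have := hj N; have := hmle N; omega
      have : (2 * j N + m N : ℝ) ≤ N := by exact_mod_cast this
      have e : (1 - (m N : ℝ) / N) / 2 = ((N - m N) / 2) / N := by field_simp
      rw [e]
      gcongr
      linarith
  have hm2 : ∀ᶠ N in atTop, 2 ≤ m N := by
    have h := (hmN.pos_mul_atTop h0 tendsto_natCast_atTop_atTop).eventually_ge_atTop 2
    filter_upwards [h, eventually_gt_atTop 0] with N h hN
    have hN' : (N : ℝ) ≠ 0 := by positivity
    rw [div_mul_cancel₀ _ hN'] at h
    exact_mod_cast h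
  have s1 := aux_seq (fun N => 2 * m N + 3 * j N - 1) ((3 + β) / 2) (by linarith) (by
    have := ((hmN.const_mul 2).add (hjN.const_mul 3)).sub hz
    rw [show 2 * β + 3 * ((1 - β) / 2) - 0 = (3 + β) / 2 by ring] at this
    refine this.congr' ?_
    filter_upwards [hm2] with N h2
    rw [Nat.cast_sub (by omega)]; push_cast; ring)
  have s2 := aux_seq (fun N => 2 * m N - 3) (2 * β) (by linarith) (by
    have := (hmN.const_mul 2).sub (hz.const_mul 3)
    rw [show 2 * β - 3 * 0 = 2 * β by ring] at this
    refine this.congr' ?_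
    filter_upwards [hm2] with N h2
    rw [Nat.cast_sub (by omega)]; push_cast; ring)
  have s3 := aux_seq (fun N => j N + 1) ((1 - β) / 2) (by linarith) (by
    have := hjN.add hz
    rw [add_zero] at this
    refine this.congr fun N => ?_
    push_cast; ring)
  have s4 := aux_seq (fun N => 2 * m N + 2 * j N) (1 + β) (by linarith) (by
    have := (hmN.const_mul 2).add (hjN.const_mul 2)
    rw [show 2 * β + 2 * ((1 - β) / 2) = 1 + β by ring] at this
    refine this.congr fun N => ?_
    push_cast; ring)
  have s5 := aux_seq (fun N => m N - 2) β h0 (by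
    have := hmN.sub (hz.const_mul 2)
    rw [show β - 2 * 0 = β by ring] at this
    refine this.congr' ?_
    filter_upwards [hm2] with N h2
    rw [Nat.cast_sub (by omega)]; push_cast; ring)
  have S := (((((hjN.add (hz.const_mul 2)).mul_const (Real.log 2)).add (s1.add s2)).sub
    ((s3.add s4).add (s5.const_mul 2))).sub hl)
  convert S.congr' ?_ using 2
  · rw [Real.log_mul (by norm_num) h0.ne']
    ring
  · filter_upwards [hm2] with N h2
    have e : C0 N (2 * ⌊β * N / 2⌋₊) = (2 : ℝ) ^ (j N + 2) *
        (Nat.factorial (2 * m N + 3 * j N - 1) : ℝ) * (Nat.factorial (2 * m N - 3) : ℝ) /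
        ((Nat.factorial (j N + 1) : ℝ) * (Nat.factorial (2 * m N + 2 * j N) : ℝ) *
        ((Nat.factorial (m N - 2) : ℝ)) ^ 2) := by
      rw [C0, ← hm, ← hj]
    have nz : ∀ k : ℕ, (Nat.factorial k : ℝ) ≠ 0 := fun k => by positivity
    rw [e, Real.log_div (by positivity) (by positivity), Real.log_mul (by positivity) (nz _),
      Real.log_mul (by positivity) (nz _), Real.log_mul (by positivity) (by positivity),
      Real.log_mul (nz _) (nz _), Real.log_pow, Real.log_pow,
      Nat.cast_sub (show 1 ≤ 2 * m N + 3 * j N by omega),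
      Nat.cast_sub (show 3 ≤ 2 * m N by omega), Nat.cast_sub h2]
    push_cast
    ring

/-- Exponential growth rate of C₀(N, 2⌊βN/2⌋) for β ∈ (0,1), and the value at β = 1. -/
theorem C0_beta_growth :
    (∀ β : ℝ, β ∈ Set.Ioo (0 : ℝ) 1 →
      Filter.Tendsto (fun N : ℕ => (1 / (N : ℝ)) * Real.log (C0 N (2 * ⌊β * N / 2⌋₊)))
        evenAtTop
        (nhds ((1 / 2) * Real.log (27 / 2) + (β / 2) * Real.log 6 +
          (1 / 2) * ∫ t in (0 : ℝ)..β, Real.log (h t)))) ∧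
    (1 / 2 : ℝ) * Real.log (27 / 2) + (1 / 2) * Real.log 6 +
        (1 / 2) * ∫ t in (0 : ℝ)..1, Real.log (h t) = Real.log 4 := by
  refine ⟨fun β hβ => ?_, ?_⟩
  · rw [aux_int β hβ.1 hβ.2.le]
    exact (aux_lim β hβ.1 hβ.2).mono_left inf_le_left
  · rw [aux_int 1 one_pos le_rfl]
    have l4 : Real.log 4 = 2 * Real.log 2 := by
      rw [show (4 : ℝ) = 2 ^ 2 by norm_num, Real.log_pow]; norm_num
    rw [l4]
    norm_num
end

section
/- Free energy, one-phase region: if μ₁ > log 6 then the free energy F = lim_{N→∞, N even} (1/N)·log Z_{0,N}(μ₁) exists and equals −(3/2)·μ₁ + (1/2)·log(27/2), where Z_{0,N}(μ₁) = exp(−3μ₁N/2) · Σ_{m even, 2 ≤ m ≤ N} exp(−μ₁ m/2)·C₀(N,m). -/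
open Filter Real MeasureTheory

/-- The partition function Z_{0,N}(μ₁) = exp(-3μ₁N/2) Σ_{m even, 2 ≤ m ≤ N} exp(-μ₁m/2) C₀(N,m). -/
noncomputable def Z (μ₁ : ℝ) (N : ℕ) : ℝ :=
  Real.exp (-3 * μ₁ * N / 2) *
    ∑ m ∈ (Finset.range (N + 1)).filter (fun m => Even m ∧ 2 ≤ m),
      Real.exp (-μ₁ * m / 2) * C0 N m


lemma aux_choose_le (n j : ℕ) (h : j ≤ n) : n.choose j * 2 ^ (n - j) ≤ 3 ^ n := by
  have h1 := add_pow (1 : ℕ) 2 n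
  have h2 : (1 + 2 : ℕ) ^ n = 3 ^ n := by norm_num
  rw [← h2, h1]
  have := Finset.single_le_sum (f := fun i => 1 ^ i * 2 ^ (n - i) * n.choose i)
    (s := Finset.range (n + 1)) (fun i _ => Nat.zero_le _)
    (Finset.mem_range.2 (Nat.lt_succ_of_le h))
  simp only [one_pow, one_mul, mul_comm] at this ⊢
  exact this

lemma aux_upper1 (p j : ℕ) :
    (2 : ℝ) ^ j * ((4 * p + 3 * j).choose j : ℝ) * 16 ^ p ≤ (27 / 2) ^ j * 81 ^ p := by
  have h := aux_choose_le (4 * p + 3 * j) j (by omega)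
  rw [show 4 * p + 3 * j - j = 4 * p + 2 * j by omega] at h
  have h' : ((4 * p + 3 * j).choose j : ℝ) * 2 ^ (4 * p + 2 * j) ≤ 3 ^ (4 * p + 3 * j) := by
    exact_mod_cast h
  rw [pow_add, pow_add, pow_mul, pow_mul, pow_mul, pow_mul] at h'
  norm_num at h'
  have e : (27 / 2 : ℝ) ^ j * 4 ^ j = 27 ^ j * 2 ^ j := by
    rw [← mul_pow, ← mul_pow]; norm_num
  have h4 : (0 : ℝ) < 4 ^ j := by positivity
  have h2 : (0 : ℝ) < 2 ^ j := by positivity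
  refine le_of_mul_le_mul_right ?_ h4
  calc _ = (((4 * p + 3 * j).choose j : ℝ) * (16 ^ p * 4 ^ j)) * 2 ^ j := by ring
    _ ≤ (81 ^ p * 27 ^ j) * 2 ^ j := by gcongr
    _ = 81 ^ p * (27 ^ j * 2 ^ j) := by ring
    _ = _ := by rw [← e]; ring

lemma aux_C0_le (p j : ℕ) (hp : 1 ≤ p) :
    C0 (2 * p + 2 * j) (2 * p) ≤ 16 * p * ((27 / 2) ^ j * 81 ^ p) := by
  obtain ⟨q, rfl⟩ : ∃ q, p = q + 1 := ⟨p - 1, by omega⟩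
  unfold C0
  rw [show (2 * (q + 1) + 2 * j - 2 * (q + 1)) / 2 = j by omega,
    show 2 * (2 * (q + 1)) - 3 = 4 * q + 1 by omega,
    show 2 * (q + 1) - 2 = 2 * q by omega]
  have hA : (((2 * (2 * (q + 1)) + 3 * j - 1).factorial : ℕ) : ℝ) ≤
      ((4 * (q + 1) + 3 * j).choose j : ℝ) * j.factorial * (4 * (q + 1) + 2 * j).factorial := by
    have := Nat.choose_mul_factorial_mul_factorial (n := 4 * (q + 1) + 3 * j) (k := j) (by omega)
    rw [show 4 * (q + 1) + 3 * j - j = 4 * (q + 1) + 2 * j by omega] at this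
    have h2 : (2 * (2 * (q + 1)) + 3 * j - 1).factorial ≤ (4 * (q + 1) + 3 * j).factorial :=
      Nat.factorial_le (by omega)
    rw [← this] at h2
    exact_mod_cast h2
  have hB : (((4 * q + 1).factorial : ℕ) : ℝ) ≤ (4 * q + 1) * 16 ^ q * ((2 * q).factorial : ℝ) ^ 2 := by
    have h1 := Nat.choose_mul_factorial_mul_factorial (n := 4 * q) (k := 2 * q) (by omega)
    rw [show 4 * q - 2 * q = 2 * q by omega] at h1
    have h3 : (4 * q).choose (2 * q) ≤ 16 ^ q := by
      refine (Nat.choose_le_two_pow _ _).trans ?_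
      rw [pow_mul]; norm_num
    rw [Nat.factorial_succ, ← h1]
    have : (4 * q + 1) * ((4 * q).choose (2 * q) * (2 * q).factorial * (2 * q).factorial) ≤
       (4 * q + 1) * 16 ^ q * (2 * q).factorial ^ 2 := by
      rw [sq, mul_assoc _ (2 * q).factorial, ← mul_assoc]
      gcongr
    exact_mod_cast this
  have hC : ((j.factorial : ℕ) : ℝ) ≤ ((j + 1).factorial : ℝ) := by
    exact_mod_cast Nat.factorial_le (by omega)
  have hU := aux_upper1 (q + 1) j
  rw [show 2 * (2 * (q + 1)) + 2 * j = 4 * (q + 1) + 2 * j by omega]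
  rw [div_le_iff₀ (by positivity)]
  set F1 := (((2 * (2 * (q + 1)) + 3 * j - 1).factorial : ℕ) : ℝ)
  set F2 := (((4 * q + 1).factorial : ℕ) : ℝ)
  set ch := ((4 * (q + 1) + 3 * j).choose j : ℝ)
  have hch : 0 ≤ ch := by positivity
  calc (2 : ℝ) ^ (j + 2) * F1 * F2
      ≤ 2 ^ (j + 2) * (ch * (j + 1).factorial * (4 * (q + 1) + 2 * j).factorial) *
        ((4 * q + 1) * 16 ^ q * ((2 * q).factorial : ℝ) ^ 2) := by
        gcongr
        exact hA.trans (by gcongr)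
    _ = (2 ^ j * ch * 16 ^ (q + 1)) * ((4 * q + 1) / 4) * ((j + 1).factorial * (4 * (q + 1) + 2 * j).factorial * ((2 * q).factorial : ℝ) ^ 2) := by ring
    _ ≤ ((27 / 2) ^ j * 81 ^ (q + 1)) * (16 * (q + 1)) * ((j + 1).factorial * (4 * (q + 1) + 2 * j).factorial * ((2 * q).factorial : ℝ) ^ 2) := by
        gcongr
        have : (0 : ℝ) ≤ q := by positivity
        linarith
    _ = _ := by push_cast; ring

lemma aux_lower (k : ℕ) :
    (27 / 4 : ℝ) ^ k * (k.factorial * (2 * k).factorial) ≤ (3 * k + 1) * (3 * k).factorial := by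
  induction k with
  | zero => simp
  | succ k ih =>
    rw [show 2 * (k + 1) = 2 * k + 1 + 1 by ring, show 3 * (k + 1) = 3 * k + 1 + 1 + 1 by ring]
    simp only [Nat.factorial_succ]
    push_cast
    have hk : (0 : ℝ) ≤ k := by positivity
    set a := (27 / 4 : ℝ) ^ k * (k.factorial * (2 * k).factorial) with ha
    have hF : (0 : ℝ) < (3 * k).factorial := by positivity
    calc _ = a * (27 / 4 * ((k + 1) * ((2 * k + 1 + 1) * (2 * k + 1)))) := by rw [ha]; ring
      _ ≤ (3 * k + 1) * (3 * k).factorial * (27 / 4 * ((k + 1) * ((2 * k + 1 + 1) * (2 * k + 1)))) := by gcongr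
      _ = ((3 * k).factorial * (3 * k + 1) * (k + 1)) * (27 / 4 * ((2 * k + 1 + 1) * (2 * k + 1))) := by ring
      _ ≤ ((3 * k).factorial * (3 * k + 1) * (k + 1)) * (3 * (3 * k + 2) * (3 * k + 4)) := by
        gcongr ?_ * ?_
        nlinarith
      _ = _ := by ring

lemma aux_C0_two (k : ℕ) (hk : 1 ≤ k) :
    (27 / 2 : ℝ) ^ k / (((2 * k : ℕ) : ℝ) + 1) ^ 3 ≤ 2 * C0 (2 * k) 2 := by
  obtain ⟨i, rfl⟩ : ∃ i, k = i + 1 := ⟨k - 1, by omega⟩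
  unfold C0
  rw [show (2 * (i + 1) - 2) / 2 = i by omega, show 2 * 2 + 3 * i - 1 = 3 * (i + 1) by omega,
    show 2 * 2 + 2 * i = 2 * (i + 1) + 1 + 1 by omega]
  have h := aux_lower (i + 1)
  rw [Nat.factorial_succ (2 * (i + 1) + 1), Nat.factorial_succ (2 * (i + 1))]
  set k := i + 1 with hk
  have e : (27 / 2 : ℝ) ^ k = (27 / 4) ^ k * 2 ^ k := by rw [← mul_pow]; norm_num
  have e2 : (2 : ℝ) ^ (i + 2) = 2 * 2 ^ k := by rw [hk]; ring
  rw [e, e2]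
  simp only [Nat.factorial, Nat.reduceMul, Nat.reduceSub, Nat.cast_one, one_pow, mul_one]
  push_cast
  have hk0 : (1 : ℝ) ≤ k := by exact_mod_cast (by omega : 1 ≤ k)
  have h2 : (0 : ℝ) < 2 ^ k := by positivity
  rw [mul_div_assoc', div_le_div_iff₀ (by positivity) (by positivity)]
  have hF : (0 : ℝ) < (3 * k).factorial := by positivity
  calc _ = ((27 / 4 : ℝ) ^ k * (k.factorial * (2 * k).factorial)) * (2 ^ k * ((2 * k + 1 + 1) * (2 * k + 1))) := by
        simp only [hk, Nat.factorial]; push_cast; ring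
    _ ≤ ((3 * k + 1) * (3 * k).factorial) * (2 ^ k * ((2 * k + 1 + 1) * (2 * k + 1))) := by gcongr
    _ = ((3 * k).factorial * 2 ^ k) * ((2 * k + 1) * ((3 * k + 1) * (2 * k + 2))) := by ring
    _ ≤ ((3 * k).factorial * 2 ^ k) * ((2 * k + 1) * (4 * (2 * k + 1) ^ 2)) := by
        gcongr ?_ * (?_ * ?_)
        nlinarith
    _ = _ := by ring

lemma aux_term (μ : ℝ) (hμ : Real.log 6 < μ) (N m : ℕ) (hN : Even N) (hm : Even m) (h2 : 2 ≤ m)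
    (hmN : m ≤ N) : Real.exp (-μ * m / 2) * C0 N m ≤ 8 * N * (27 / 2) ^ (N / 2) := by
  obtain ⟨p, hp⟩ := hm
  obtain ⟨k, hk⟩ := hN
  obtain ⟨j, rfl⟩ : ∃ j, k = p + j := ⟨k - p, by omega⟩
  obtain rfl : m = 2 * p := by omega
  obtain rfl : N = 2 * p + 2 * j := by omega
  have h := aux_C0_le p j (by omega)
  rw [show (2 * p + 2 * j) / 2 = j + p by omega]
  have he : Real.exp (-μ * ((2 * p : ℕ) : ℝ) / 2) ≤ (1 / 6) ^ p := by
    have : Real.exp (-μ * ((2 * p : ℕ) : ℝ) / 2) = (Real.exp (-μ)) ^ p := by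
      rw [← Real.exp_nat_mul]; push_cast; ring_nf
    rw [this]
    gcongr
    have : Real.exp (-μ) ≤ Real.exp (-Real.log 6) := Real.exp_le_exp.2 (by linarith)
    rw [Real.exp_neg (Real.log 6), Real.exp_log (by norm_num)] at this
    simpa using this
  have e : (1 / 6 : ℝ) ^ p * 81 ^ p = (27 / 2) ^ p := by rw [← mul_pow]; norm_num
  calc _ ≤ Real.exp (-μ * ((2 * p : ℕ) : ℝ) / 2) * (16 * p * ((27 / 2) ^ j * 81 ^ p)) := by gcongr
    _ ≤ (1 / 6) ^ p * (16 * p * ((27 / 2) ^ j * 81 ^ p)) := by gcongr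
    _ = 16 * p * ((27 / 2) ^ j * ((1 / 6) ^ p * 81 ^ p)) := by ring
    _ = 16 * p * (27 / 2) ^ (j + p) := by rw [e, pow_add]
    _ ≤ _ := by
      refine mul_le_mul_of_nonneg_right ?_ (by positivity)
      push_cast
      have : (0 : ℝ) ≤ j := by positivity
      linarith

lemma aux_C0_nonneg (N m : ℕ) : 0 ≤ C0 N m := by unfold C0; positivity

lemma aux_bound (μ : ℝ) (hμ : Real.log 6 < μ) (N : ℕ) (hN : Even N) (h2 : 2 ≤ N) :
    |(1 / (N : ℝ)) * Real.log (Z μ N) - (-(3 / 2) * μ + (1 / 2) * Real.log (27 / 2))| ≤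
      (|μ| + Real.log 8 + 3 * Real.log ((N : ℝ) + 1)) / N := by
  set S := ∑ m ∈ (Finset.range (N + 1)).filter (fun m => Even m ∧ 2 ≤ m),
      Real.exp (-μ * m / 2) * C0 N m with hS
  obtain ⟨k, hk⟩ := hN
  have hNk : N = 2 * k := by omega
  have hN0 : (0 : ℝ) < N := by exact_mod_cast (by omega : 0 < N)
  have up : S ≤ 8 * ((N : ℝ) + 1) ^ 2 * (27 / 2) ^ k := by
    have h1 : S ≤ ((Finset.range (N + 1)).filter (fun m => Even m ∧ 2 ≤ m)).card •
        (8 * N * (27 / 2 : ℝ) ^ k) := by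
      refine Finset.sum_le_card_nsmul _ _ _ ?_
      intro m hm
      rw [Finset.mem_filter, Finset.mem_range] at hm
      have := aux_term μ hμ N m ⟨k, hk⟩ hm.2.1 hm.2.2 (by omega)
      rwa [show N / 2 = k by omega] at this
    have hc : (((Finset.range (N + 1)).filter (fun m => Even m ∧ 2 ≤ m)).card : ℝ) ≤ N + 1 := by
      have := Finset.card_filter_le (Finset.range (N + 1)) (fun m => Even m ∧ 2 ≤ m)
      rw [Finset.card_range] at this
      exact_mod_cast this
    rw [nsmul_eq_mul] at h1
    calc S ≤ _ := h1
      _ ≤ ((N : ℝ) + 1) * (8 * ((N : ℝ) + 1) * (27 / 2 : ℝ) ^ k) := by gcongr; linarith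
      _ = _ := by ring
  have lo : Real.exp (-μ) * ((27 / 2) ^ k / ((N : ℝ) + 1) ^ 3 / 2) ≤ S := by
    have h1 := aux_C0_two k (by omega)
    rw [← hNk] at h1
    have h3 := Finset.single_le_sum (f := fun m : ℕ => Real.exp (-μ * m / 2) * C0 N m)
      (s := (Finset.range (N + 1)).filter (fun m => Even m ∧ 2 ≤ m))
      (fun i _ => mul_nonneg (Real.exp_pos _).le (aux_C0_nonneg _ _))
      (a := 2) (by simp; omega)
    refine le_trans ?_ h3
    have : Real.exp (-μ * ((2 : ℕ) : ℝ) / 2) = Real.exp (-μ) := by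
      congr 1; push_cast; ring
    simp only [this]
    gcongr
    linarith
  have hSpos : 0 < S := lt_of_lt_of_le (by positivity) lo
  have lup := Real.log_le_log hSpos up
  have llo := Real.log_le_log (by positivity) lo
  rw [Real.log_mul (by positivity) (by positivity), Real.log_mul (by positivity) (by positivity),
    Real.log_pow, Real.log_pow] at lup
  rw [Real.log_mul (by positivity) (by positivity), Real.log_div (by positivity) (by positivity),
    Real.log_div (by positivity) (by positivity), Real.log_exp,
    Real.log_pow, Real.log_pow] at llo
  have hZ : Real.log (Z μ N) = -3 * μ * N / 2 + Real.log S := by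
    unfold Z
    rw [Real.log_mul (by positivity) hSpos.ne', Real.log_exp]
  have hkN : (k : ℝ) = N / 2 := by rw [hNk]; push_cast; ring
  have e : (1 / (N : ℝ)) * Real.log (Z μ N) - (-(3 / 2) * μ + (1 / 2) * Real.log (27 / 2)) =
      (Real.log S - k * Real.log (27 / 2)) / N := by
    rw [hZ, hkN]; field_simp; ring
  rw [e, abs_div, abs_of_pos hN0]
  have hl : 0 ≤ Real.log ((N : ℝ) + 1) := Real.log_nonneg (by linarith)
  have h28 : Real.log 2 ≤ Real.log 8 := Real.log_le_log (by norm_num) (by norm_num)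
  have hm1 := le_abs_self μ
  have hm2 := abs_nonneg μ
  push_cast at lup llo
  gcongr
  rw [abs_le]
  constructor <;> linarith

/-- Free energy in the one-phase (subcritical) region μ₁ > log 6. -/
theorem free_energy_subcritical (μ₁ : ℝ) (hμ : Real.log 6 < μ₁) :
    Filter.Tendsto (fun N : ℕ => (1 / (N : ℝ)) * Real.log (Z μ₁ N)) evenAtTop
      (nhds (-(3 / 2) * μ₁ + (1 / 2) * Real.log (27 / 2))) := by
  have hle : evenAtTop ≤ atTop := inf_le_left
  have hlog : Tendsto (fun x : ℝ => Real.log x / x) atTop (nhds 0) :=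
    Real.isLittleO_log_id_atTop.tendsto_div_nhds_zero
  have hcast : Tendsto (fun N : ℕ => (N : ℝ)) atTop atTop := tendsto_natCast_atTop_atTop
  have h1 : Tendsto (fun N : ℕ => (|μ₁| + Real.log 8 + 3 * Real.log 2) / (N : ℝ)
      + 3 * (Real.log N / N)) atTop (nhds 0) := by
    have a := (tendsto_const_nhds (x := |μ₁| + Real.log 8 + 3 * Real.log 2)).div_atTop hcast
    have b := (hlog.comp hcast).const_mul 3
    simpa using a.add b
  rw [tendsto_iff_norm_sub_tendsto_zero]
  refine squeeze_zero' (Eventually.of_forall fun _ => norm_nonneg _) ?_ (h1.mono_left hle)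
  have hE : ∀ᶠ N in evenAtTop, Even N :=
    (inf_le_right : evenAtTop ≤ _) (mem_principal_self _)
  have hG : ∀ᶠ N in evenAtTop, 2 ≤ N := hle (eventually_ge_atTop 2)
  filter_upwards [hE, hG] with N hN h2
  rw [Real.norm_eq_abs]
  refine (aux_bound μ₁ hμ N hN h2).trans ?_
  have hN2 : (2 : ℝ) ≤ N := by exact_mod_cast h2
  have : Real.log ((N : ℝ) + 1) ≤ Real.log 2 + Real.log N := by
    rw [← Real.log_mul (by norm_num) (by positivity)]
    exact Real.log_le_log (by positivity) (by linarith)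
  rw [mul_div_assoc', ← add_div]
  refine div_le_div_of_nonneg_right ?_ (by positivity)
  linarith
end

section
/- Free energy, elongated region: if μ₁ < log 6 then the free energy F = lim_{N→∞, N even} (1/N)·log Z_{0,N}(μ₁) exists and equals −(3/2)·μ₁ + (1/2)·log(27/2) + (β₀/2)·(log 6 − μ₁) + (1/2)·∫₀^{β₀} log h(β) dβ, where β₀ ∈ (0,1) is the unique solution of 6·h(β₀)·exp(−μ₁) = 1. -/
open Filter Real MeasureTheory

lemma log_fact_lower (n : ℕ) : (n:ℝ) * log n - n ≤ log (Nat.factorial n : ℝ) := by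
  rcases Nat.eq_zero_or_pos n with rfl | hn
  · simp
  have hn' : (0:ℝ) < n := by exact_mod_cast hn
  have h1 := Real.pow_div_factorial_le_exp (n:ℝ) hn'.le n
  have hf : (0:ℝ) < Nat.factorial n := by exact_mod_cast Nat.factorial_pos n
  have h2 := Real.log_le_log (by positivity) h1
  rw [Real.log_exp, Real.log_div (by positivity) hf.ne', Real.log_pow] at h2
  linarith

lemma log_fact_aux (n : ℕ) : log (Nat.factorial n : ℝ) ≤ ((n:ℝ)+1) * log (n+1) - n := by
  induction n with
  | zero => simp
  | succ n ih =>
    have hf : (0:ℝ) < Nat.factorial n := by exact_mod_cast Nat.factorial_pos n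
    have hn : (0:ℝ) ≤ n := Nat.cast_nonneg n
    rw [Nat.factorial_succ]
    push_cast
    rw [Real.log_mul (by positivity) hf.ne']
    have h1 := Real.one_sub_inv_le_log_of_pos (x := ((n:ℝ)+1+1)/(n+1)) (by positivity)
    rw [Real.log_div (by positivity) (by positivity), inv_div] at h1
    have h2 : 1 - ((n:ℝ)+1)/(n+1+1) = 1/(n+1+1) := by field_simp; ring
    rw [h2, div_le_iff₀ (by positivity)] at h1
    nlinarith

lemma log_fact_upper (n : ℕ) :
    log (Nat.factorial n : ℝ) ≤ (n:ℝ) * log n - n + (log (n+1) + 1) := by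
  have h0 := log_fact_aux n
  rcases Nat.eq_zero_or_pos n with rfl | hn
  · simp
  have hn' : (0:ℝ) < n := by exact_mod_cast hn
  have h1 := Real.log_le_sub_one_of_pos (x := ((n:ℝ)+1)/n) (by positivity)
  rw [Real.log_div (by positivity) (by positivity)] at h1
  have h2 : ((n:ℝ)+1)/n - 1 = 1/n := by field_simp; ring
  rw [h2, le_div_iff₀ hn'] at h1
  nlinarith

noncomputable def phi (x : ℝ) : ℝ := x * log x

noncomputable def FF (μ b : ℝ) : ℝ :=
  (1-b)/2 * log 2 + phi ((3+b)/2) + 2*b*log 2 - phi ((1-b)/2) - phi (1+b) - μ*b/2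

lemma phi_mul (N x : ℝ) (hN : 0 < N) (hx : 0 ≤ x) : phi (N*x) = N * phi x + N*x*log N := by
  unfold phi
  rcases hx.eq_or_lt with rfl | hx
  · simp
  rw [Real.log_mul hN.ne' hx.ne']; ring

lemma FF_hom (μ : ℝ) (m j : ℕ) (hm : 2 ≤ m) :
    ((m:ℝ)+2*j) * FF μ (m/((m:ℝ)+2*j)) = j * log 2 + phi (2*m+3*j) + phi (2*m) - phi j
      - phi (2*m+2*j) - 2 * phi m - μ*m/2 := by
  have hm' : (2:ℝ) ≤ m := by exact_mod_cast hm
  have hj : (0:ℝ) ≤ j := Nat.cast_nonneg j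
  have hN : (0:ℝ) < (m:ℝ)+2*j := by linarith
  generalize hNN : (m:ℝ)+2*j = N at *
  generalize hb : (m:ℝ)/N = b
  have hmb : (m:ℝ) = N*b := by rw [← hb]; field_simp
  have hb0 : 0 < b := by rw [← hb]; positivity
  have hjb : (j:ℝ) = N*((1-b)/2) := by linarith
  have hb1 : 0 ≤ (1-b)/2 := by
    by_contra hc
    push Not at hc
    nlinarith
  have e1 : 2*(m:ℝ)+3*j = N*((3+b)/2) := by linarith
  have e2 : 2*(m:ℝ)+2*j = N*(1+b) := by linarith
  have e3 : 2*(m:ℝ) = N*(2*b) := by linarith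
  rw [e1, e2, e3, hmb, hjb, phi_mul _ _ hN (by linarith), phi_mul _ _ hN (by linarith),
    phi_mul _ _ hN (by linarith), phi_mul _ _ hN (by linarith), phi_mul _ _ hN (by linarith)]
  have e4 : phi (2*b) = 2 * phi b + 2 * b * log 2 := phi_mul _ _ two_pos hb0.le
  rw [e4]
  unfold FF
  ring

noncomputable def DD (m j : ℕ) : ℝ :=
  (2:ℝ)^j * (Nat.factorial (2*m+3*j) : ℝ) * (Nat.factorial (2*m) : ℝ) /
   ((Nat.factorial j : ℝ) * (Nat.factorial (2*m+2*j) : ℝ) * (Nat.factorial m : ℝ)^2)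

lemma DD_pos (m j : ℕ) : 0 < DD m j := by unfold DD; positivity

lemma C0_eq (m j : ℕ) (hm : 2 ≤ m) : C0 (m+2*j) m =
    DD m j * ((m:ℝ)*(m-1)/((2*m+3*j)*(2*m-1)*(j+1))) := by
  obtain ⟨k, rfl⟩ := Nat.exists_eq_add_of_le' hm
  have e0 : (k+2+2*j-(k+2))/2 = j := by omega
  unfold C0 DD
  rw [e0]
  have e1 : 2*(k+2)+3*j = (2*(k+2)+3*j-1)+1 := by omega
  have e2 : 2*(k+2) = (2*k+1)+1+1+1 := by ring
  have e2' : 2*(k+2)-3 = 2*k+1 := by omega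
  have f1 : (Nat.factorial (2*(k+2)+3*j) : ℝ) = (2*(k+2)+3*j) * (Nat.factorial (2*(k+2)+3*j-1) : ℝ) := by
    conv_lhs => rw [e1, Nat.factorial_succ]
    rw [← e1]; push_cast; ring
  have f2 : (Nat.factorial (2*(k+2)) : ℝ) = (2*k+4)*(2*k+3)*(2*k+2)*(Nat.factorial (2*k+1) : ℝ) := by
    rw [e2, Nat.factorial_succ, Nat.factorial_succ, Nat.factorial_succ]; push_cast; ring
  have f3 : (Nat.factorial (k+2) : ℝ) = (k+2)*(k+1)*(Nat.factorial k : ℝ) := by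
    rw [Nat.factorial_succ, Nat.factorial_succ]; push_cast; ring
  have f4 : (Nat.factorial (j+1) : ℝ) = (j+1)*(Nat.factorial j : ℝ) := by
    rw [Nat.factorial_succ]; push_cast; ring
  rw [f1, f2, f3, f4, e2', Nat.add_sub_cancel]
  have g1 : (0:ℝ) < Nat.factorial k := by positivity
  have g2 : (0:ℝ) < Nat.factorial j := by positivity
  have g3 : (0:ℝ) < Nat.factorial (2*(k+2)+2*j) := by positivity
  generalize (Nat.factorial k : ℝ) = a1 at *
  generalize (Nat.factorial j : ℝ) = a2 at *
  generalize (Nat.factorial (2*(k+2)+2*j) : ℝ) = a3 at *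
  generalize (Nat.factorial (2*(k+2)+3*j-1) : ℝ) = a4 at *
  generalize (Nat.factorial (2*k+1) : ℝ) = a5 at *
  push_cast
  have hk : (0:ℝ) ≤ k := Nat.cast_nonneg k
  generalize (k:ℝ) = x at *
  have hj : (0:ℝ) ≤ j := Nat.cast_nonneg j
  have p1 : 2*(x+2)-1 ≠ 0 := by linarith
  have p2 : 2*(x+2)+3*(j:ℝ) ≠ 0 := by linarith
  have p3 : (j:ℝ)+1 ≠ 0 := by linarith
  have p4 : x+2 ≠ 0 := by linarith
  have p5 : x+1 ≠ 0 := by linarith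
  rw [pow_add]
  rw [div_mul_div_comm, div_eq_div_iff (by positivity) (by
    refine mul_ne_zero (by positivity) (mul_ne_zero (mul_ne_zero p2 p1) p3))]
  ring

lemma ratio_bounds (m j : ℕ) (hm : 2 ≤ m) :
    (m:ℝ)*(m-1)/((2*m+3*j)*(2*m-1)*(j+1)) ≤ 1 ∧
    1/(2*((m:ℝ)+2*j)+1)^3 ≤ (m:ℝ)*(m-1)/((2*m+3*j)*(2*m-1)*(j+1)) := by
  have hm' : (2:ℝ) ≤ m := by exact_mod_cast hm
  have hj : (0:ℝ) ≤ j := Nat.cast_nonneg j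
  generalize (m:ℝ) = x at *
  generalize (j:ℝ) = y at *
  have p1 : 0 < 2*x-1 := by linarith
  constructor
  · rw [div_le_one (by positivity)]
    calc x*(x-1) ≤ (2*x+3*y)*(2*x-1) := by gcongr <;> linarith
      _ ≤ (2*x+3*y)*(2*x-1)*(y+1) := by
        apply le_mul_of_one_le_right (by positivity) (by linarith)
  · apply div_le_div₀
    · nlinarith
    · nlinarith
    · positivity
    · have : (2*(x+2*y)+1)^3 = (2*(x+2*y)+1)*(2*(x+2*y)+1)*(2*(x+2*y)+1) := by ring
      rw [this]
      exact mul_le_mul (mul_le_mul (by linarith) (by linarith) p1.le (by positivity)) (by linarith)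
        (by positivity) (by positivity)

lemma C0_pos (m j : ℕ) (hm : 2 ≤ m) : 0 < C0 (m+2*j) m := by
  rw [C0_eq m j hm]
  refine mul_pos (DD_pos m j) (lt_of_lt_of_le ?_ (ratio_bounds m j hm).2)
  positivity

lemma log_C0 (μ : ℝ) (m j : ℕ) (hm : 2 ≤ m) :
    |(-μ*m/2 + log (C0 (m+2*j) m)) - ((m:ℝ)+2*j) * FF μ (m/((m:ℝ)+2*j))| ≤
      9 * log (2*((m:ℝ)+2*j)+1) + 6 := by
  have hm' : (2:ℝ) ≤ m := by exact_mod_cast hm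
  have hj : (0:ℝ) ≤ j := Nat.cast_nonneg j
  obtain ⟨r1, r2⟩ := ratio_bounds m j hm
  have r0 := lt_of_lt_of_le (by positivity) r2
  have hC : log (C0 (m+2*j) m) = log (DD m j) +
      log ((m:ℝ)*(m-1)/((2*m+3*j)*(2*m-1)*(j+1))) := by
    rw [C0_eq m j hm, Real.log_mul (DD_pos m j).ne' r0.ne']
  have l1 := Real.log_le_log r0 r1
  have l2 := Real.log_le_log (by positivity) r2
  rw [Real.log_one] at l1
  rw [Real.log_div one_ne_zero (by positivity), Real.log_one, Real.log_pow] at l2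
  push_cast at l2
  have hD : log (DD m j) = j * log 2 + log (Nat.factorial (2*m+3*j) : ℝ)
      + log (Nat.factorial (2*m) : ℝ) - log (Nat.factorial j : ℝ)
      - log (Nat.factorial (2*m+2*j) : ℝ) - 2 * log (Nat.factorial m : ℝ) := by
    unfold DD
    rw [Real.log_div (by positivity) (by positivity), Real.log_mul (by positivity) (by positivity),
      Real.log_mul (by positivity) (by positivity), Real.log_mul (by positivity) (by positivity),
      Real.log_mul (by positivity) (by positivity), Real.log_pow, Real.log_pow]
    push_cast; ring
  have up : ∀ n : ℕ, (n:ℝ) ≤ 2*((m:ℝ)+2*j) →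
      log (Nat.factorial n : ℝ) ≤ phi n - n + (log (2*((m:ℝ)+2*j)+1) + 1) := by
    intro n hn
    have := log_fact_upper n
    have h2 : log ((n:ℝ)+1) ≤ log (2*((m:ℝ)+2*j)+1) := Real.log_le_log (by positivity) (by linarith)
    unfold phi; linarith
  have lo : ∀ n : ℕ, phi n - n ≤ log (Nat.factorial n : ℝ) := fun n => log_fact_lower n
  have u1 := up (2*m+3*j) (by push_cast; linarith)
  have u2 := up (2*m) (by push_cast; linarith)
  have u3 := up (2*m+2*j) (by push_cast; linarith)
  have u4 := up m (by linarith)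
  have u5 := up j (by linarith)
  have v1 := lo (2*m+3*j)
  have v2 := lo (2*m)
  have v3 := lo (2*m+2*j)
  have v4 := lo m
  have v5 := lo j
  push_cast at u1 u2 u3 v1 v2 v3
  have hl : 0 ≤ log (2*((m:ℝ)+2*j)+1) := Real.log_nonneg (by linarith)
  rw [FF_hom μ m j hm, hC, hD, abs_le]
  constructor <;> linarith

lemma term_bound (μ : ℝ) (N m : ℕ) (hN : Even N) (hme : Even m) (hm : 2 ≤ m) (hmN : m ≤ N) :
    |(-μ*m/2 + log (C0 N m)) - (N:ℝ) * FF μ (m/(N:ℝ))| ≤ 9 * log (2*(N:ℝ)+1) + 6 ∧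
    0 < C0 N m := by
  obtain ⟨a, rfl⟩ := hN
  obtain ⟨b, rfl⟩ := hme
  obtain ⟨j, rfl⟩ : ∃ j, a = b + j := ⟨a-b, by omega⟩
  have e : b + j + (b + j) = (b+b) + 2*j := by ring
  rw [e]
  refine ⟨?_, C0_pos _ _ hm⟩
  have := log_C0 μ (b+b) j hm
  push_cast at this ⊢
  exact this

lemma phi_hasDeriv (x : ℝ) (hx : 0 < x) : HasDerivAt phi (log x + 1) x :=
  Real.hasDerivAt_mul_log hx.ne'

lemma h_eq (b : ℝ) (hb : 0 ≤ b) (hb1 : b < 1) : h b = (3+b)*(1-b)/(3*(1+b)^2) := by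
  unfold h
  have : 1-b ≠ 0 := by linarith
  have h2 : 1+b ≠ 0 := by linarith
  have : 1 + 2*b/(1-b) = (1+b)/(1-b) := by field_simp; ring
  rw [this]
  field_simp
  ring

lemma h_pos (b : ℝ) (hb : 0 ≤ b) (hb1 : b < 1) : 0 < h b := by
  rw [h_eq b hb hb1]
  have : 0 < 1-b := by linarith
  positivity

lemma h_anti (a b : ℝ) (ha : 0 ≤ a) (hab : a ≤ b) (hb1 : b < 1) : h b ≤ h a := by
  rw [h_eq b (ha.trans hab) hb1, h_eq a ha (hab.trans_lt hb1)]
  have : 0 < 1-b := by linarith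
  apply div_le_div₀
  · exact mul_nonneg (by linarith) (by linarith)
  · nlinarith
  · positivity
  · gcongr

lemma FF_hasDeriv (μ b : ℝ) (hb : 0 ≤ b) (hb1 : b < 1) :
    HasDerivAt (FF μ) (1/2 * log (h b) + (log 6 - μ)/2) b := by
  have p : 0 < 1-b := by linarith
  have i := hasDerivAt_id b
  have d1 : HasDerivAt (fun b : ℝ => phi ((3+b)/2)) ((log ((3+b)/2)+1)*(1/2)) b :=
    HasDerivAt.comp (h₂ := phi) (h := fun b : ℝ => (3+b)/2) b
      (phi_hasDeriv ((3+b)/2) (by positivity)) ((i.const_add 3).div_const 2)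
  have d2 : HasDerivAt (fun b : ℝ => phi ((1-b)/2)) ((log ((1-b)/2)+1)*(-1/2)) b :=
    HasDerivAt.comp (h₂ := phi) (h := fun b : ℝ => (1-b)/2) b
      (phi_hasDeriv ((1-b)/2) (by positivity)) ((i.const_sub 1).div_const 2)
  have d3 : HasDerivAt (fun b : ℝ => phi (1+b)) ((log (1+b)+1)*1) b :=
    (phi_hasDeriv (1+b) (by positivity)).comp b (i.const_add 1)
  have d4 : HasDerivAt (fun b : ℝ => (1-b)/2 * log 2) ((-1)/2 * log 2) b :=
    ((i.const_sub 1).div_const 2).mul_const _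
  have d5 : HasDerivAt (fun b : ℝ => 2*b*log 2) (2*1*log 2) b := (i.const_mul 2).mul_const _
  have d6 : HasDerivAt (fun b : ℝ => μ*b/2) (μ*1/2) b := (i.const_mul μ).div_const 2
  have D := ((((d4.add d1).add d5).sub d2).sub d3).sub d6
  refine HasDerivAt.congr_deriv (f := FF μ) D ?_
  rw [h_eq b hb hb1]
  have l6 : log 6 = log 2 + log 3 := by rw [← Real.log_mul (by norm_num) (by norm_num)]; norm_num
  rw [l6, Real.log_div (by positivity) (by positivity), Real.log_div (by positivity) (by positivity),
    Real.log_div (by positivity) (by positivity), Real.log_mul (by positivity) (by positivity),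
    Real.log_mul (by positivity) (by positivity), Real.log_pow]
  push_cast; ring

lemma FF_cont (μ : ℝ) : Continuous (FF μ) := by
  have hp : Continuous phi := Real.continuous_mul_log
  unfold FF
  fun_prop

lemma sol_log (μ b : ℝ) (hb : b ∈ Set.Ioo (0:ℝ) 1) (hsol : 6 * h b * Real.exp (-μ) = 1) :
    log (h b) = μ - log 6 := by
  have hp := h_pos b hb.1.le hb.2
  have := congrArg Real.log hsol
  rw [Real.log_mul (by positivity) (by positivity), Real.log_mul (by norm_num) hp.ne',
    Real.log_exp, Real.log_one] at this
  linarith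

lemma FF_max (μ b : ℝ) (hb : b ∈ Set.Ioo (0:ℝ) 1) (hsol : 6 * h b * Real.exp (-μ) = 1)
    (x : ℝ) (h0 : 0 ≤ x) (h1 : x ≤ 1) : FF μ x ≤ FF μ b := by
  have hl := sol_log μ b hb hsol
  rcases le_total x b with hx | hx
  · have : MonotoneOn (FF μ) (Set.Icc 0 b) := by
      apply monotoneOn_of_deriv_nonneg (convex_Icc _ _) (FF_cont μ).continuousOn
      · intro y hy
        rw [interior_Icc] at hy
        exact (FF_hasDeriv μ y hy.1.le (hy.2.trans hb.2)).differentiableAt.differentiableWithinAt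
      · intro y hy
        rw [interior_Icc] at hy
        rw [(FF_hasDeriv μ y hy.1.le (hy.2.trans hb.2)).deriv]
        have := Real.log_le_log (h_pos b hb.1.le hb.2) (h_anti y b hy.1.le hy.2.le hb.2)
        linarith
    exact this ⟨h0, hx⟩ ⟨hb.1.le, le_rfl⟩ hx
  · have : AntitoneOn (FF μ) (Set.Icc b 1) := by
      apply antitoneOn_of_deriv_nonpos (convex_Icc _ _) (FF_cont μ).continuousOn
      · intro y hy
        rw [interior_Icc] at hy
        exact (FF_hasDeriv μ y (hb.1.trans hy.1).le hy.2).differentiableAt.differentiableWithinAt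
      · intro y hy
        rw [interior_Icc] at hy
        rw [(FF_hasDeriv μ y (hb.1.trans hy.1).le hy.2).deriv]
        have := Real.log_le_log (h_pos y (hb.1.trans hy.1).le hy.2) (h_anti b y hb.1.le hy.1.le hy.2)
        linarith
    exact this ⟨le_rfl, hb.2.le⟩ ⟨hx, h1⟩ hx

lemma FF_value (μ b : ℝ) (hb : b ∈ Set.Ioo (0:ℝ) 1) :
    FF μ b = (1/2) * log (27/2) + (b/2) * (log 6 - μ) + (1/2) * ∫ t in (0:ℝ)..b, log (h t) := by
  have hsub : ∀ t ∈ Set.uIcc 0 b, 0 ≤ t ∧ t < 1 := by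
    intro t ht
    rw [Set.uIcc_of_le hb.1.le] at ht
    exact ⟨ht.1, ht.2.trans_lt hb.2⟩
  have hc : ContinuousOn (fun t => log (h t)) (Set.uIcc 0 b) := by
    apply ContinuousOn.log
    · have : ContinuousOn (fun b : ℝ => (3+b)*(1-b)/(3*(1+b)^2)) (Set.uIcc 0 b) := by
        apply ContinuousOn.div (by fun_prop) (by fun_prop)
        intro t ht
        have := (hsub t ht).1
        positivity
      exact this.congr fun t ht => h_eq t (hsub t ht).1 (hsub t ht).2
    · intro t ht
      exact (h_pos t (hsub t ht).1 (hsub t ht).2).ne'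
  have hi : IntervalIntegrable (fun t => log (h t)) volume 0 b := hc.intervalIntegrable
  have key := intervalIntegral.integral_eq_sub_of_hasDerivAt
    (fun t ht => FF_hasDeriv μ t (hsub t ht).1 (hsub t ht).2)
    ((hi.const_mul (1/2)).add intervalIntegrable_const)
  rw [intervalIntegral.integral_add (hi.const_mul (1/2)) intervalIntegrable_const,
    intervalIntegral.integral_const_mul, intervalIntegral.integral_const] at key
  have h0 : FF μ 0 = (1/2) * log (27/2) := by
    unfold FF phi
    have e1 : log (27/2) = 3 * log 3 - log 2 := by
      rw [Real.log_div (by norm_num) (by norm_num), show (27:ℝ) = 3^3 by norm_num, Real.log_pow]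
      norm_num
    have e2 : log ((3+0)/2) = log 3 - log 2 := by
      rw [Real.log_div (by norm_num) (by norm_num)]; norm_num
    have e3 : log ((1-0)/2) = - log 2 := by
      rw [Real.log_div (by norm_num) (by norm_num)]; norm_num
    rw [e1, e2, e3]
    simp
    ring
  rw [h0] at key
  simp only [smul_eq_mul] at key
  linarith

lemma err_tendsto : Tendsto (fun N : ℕ => (10 * log (2*(N:ℝ)+1) + 6) / (N:ℝ)) atTop (nhds 0) := by
  have h1 : (fun x : ℝ => 10 * log (2*x+1) + 6) =o[atTop] (fun x : ℝ => x) := by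
    have a : (fun x : ℝ => log (2*x+1)) =o[atTop] (fun x : ℝ => x) := by
      have t : Tendsto (fun x : ℝ => 2*x+1) atTop atTop :=
        tendsto_atTop_add_const_right _ _ (tendsto_id.const_mul_atTop two_pos)
      have b := Real.isLittleO_log_id_atTop.comp_tendsto t
      refine b.trans_isBigO ?_
      refine Asymptotics.IsBigO.of_bound 3 ?_
      filter_upwards [eventually_ge_atTop 1] with x hx
      simp only [Function.comp, id, Real.norm_eq_abs]
      rw [abs_of_nonneg (by linarith), abs_of_nonneg (by linarith)]
      linarith
    exact (a.const_mul_left 10).add (Asymptotics.isLittleO_const_id_atTop 6)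
  exact h1.tendsto_div_nhds_zero.comp tendsto_natCast_atTop_atTop

lemma upper_bd (μ b : ℝ) (hb : b ∈ Set.Ioo (0:ℝ) 1) (hsol : 6 * h b * Real.exp (-μ) = 1)
    (N : ℕ) (hN : Even N) (hN2 : 2 ≤ N) :
    (1/(N:ℝ)) * log (Z μ N) ≤ -(3/2)*μ + FF μ b + (10 * log (2*(N:ℝ)+1) + 6) / (N:ℝ) := by
  have hNp : (0:ℝ) < N := by exact_mod_cast (by omega : 0 < N)
  set s := (Finset.range (N + 1)).filter (fun m => Even m ∧ 2 ≤ m) with hs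
  have hterm : ∀ m ∈ s, Real.exp (-μ * m / 2) * C0 N m ≤
      Real.exp (N * FF μ b + (9 * log (2*(N:ℝ)+1) + 6)) := by
    intro m hm
    simp only [hs, Finset.mem_filter, Finset.mem_range] at hm
    obtain ⟨t1, t2⟩ := term_bound μ N m hN hm.2.1 hm.2.2 (by omega)
    have hmN : (m:ℝ) ≤ N := by exact_mod_cast (by omega : m ≤ N)
    have := FF_max μ b hb hsol (m/(N:ℝ)) (by positivity) ((div_le_one hNp).2 hmN)
    have h3 := mul_le_mul_of_nonneg_left this hNp.le
    rw [← Real.exp_log t2, ← Real.exp_add]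
    apply Real.exp_le_exp.2
    have := (abs_le.1 t1).2
    linarith
  have hsum := Finset.sum_le_card_nsmul s _ _ hterm
  have hcard : (s.card : ℝ) ≤ 2*(N:ℝ)+1 := by
    have : s.card ≤ N+1 := by simpa using Finset.card_filter_le (Finset.range (N+1)) _
    have h2 : (s.card:ℝ) ≤ N+1 := by exact_mod_cast this
    linarith
  have hNs : N ∈ s := by simp [hs, hN, hN2]
  have hpos : 0 < ∑ m ∈ s, Real.exp (-μ * m / 2) * C0 N m := by
    apply Finset.sum_pos _ ⟨N, hNs⟩
    intro m hm
    simp only [hs, Finset.mem_filter, Finset.mem_range] at hm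
    exact mul_pos (Real.exp_pos _) (term_bound μ N m hN hm.2.1 hm.2.2 (by omega)).2
  have hl : log (∑ m ∈ s, Real.exp (-μ * m / 2) * C0 N m) ≤
      log (2*(N:ℝ)+1) + (N * FF μ b + (9 * log (2*(N:ℝ)+1) + 6)) := by
    rw [nsmul_eq_mul] at hsum
    have h4 := hsum.trans (mul_le_mul_of_nonneg_right hcard (Real.exp_pos _).le)
    have h5 := Real.log_le_log hpos h4
    rwa [Real.log_mul (by positivity) (by positivity), Real.log_exp] at h5
  unfold Z
  rw [Real.log_mul (by positivity) hpos.ne', Real.log_exp, one_div, inv_mul_le_iff₀ hNp]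
  have : (N:ℝ) * (-(3/2)*μ + FF μ b + (10 * log (2*(N:ℝ)+1) + 6) / (N:ℝ)) =
    N*(-(3/2)*μ + FF μ b) + (10 * log (2*(N:ℝ)+1) + 6) := by field_simp
  rw [this]
  linarith

lemma lower_bd (μ : ℝ) (N m : ℕ) (hN : Even N) (hme : Even m) (hm : 2 ≤ m) (hmN : m ≤ N) :
    -(3/2)*μ + FF μ (m/(N:ℝ)) - (10 * log (2*(N:ℝ)+1) + 6) / (N:ℝ) ≤ (1/(N:ℝ)) * log (Z μ N) := by
  have hNp : (0:ℝ) < N := by exact_mod_cast (by omega : 0 < N)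
  set s := (Finset.range (N + 1)).filter (fun m => Even m ∧ 2 ≤ m) with hs
  obtain ⟨t1, t2⟩ := term_bound μ N m hN hme hm hmN
  have hms : m ∈ s := by simp [hs, hme, hm]; omega
  have hle : Real.exp (-μ * m / 2) * C0 N m ≤ ∑ m ∈ s, Real.exp (-μ * m / 2) * C0 N m := by
    apply Finset.single_le_sum (f := fun m : ℕ => Real.exp (-μ * m / 2) * C0 N m) _ hms
    intro k hk
    simp only [hs, Finset.mem_filter, Finset.mem_range] at hk
    exact (mul_pos (Real.exp_pos _) (term_bound μ N k hN hk.2.1 hk.2.2 (by omega)).2).le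
  have hp0 : 0 < Real.exp (-μ * m / 2) * C0 N m := mul_pos (Real.exp_pos _) t2
  have hl := Real.log_le_log hp0 hle
  rw [Real.log_mul (by positivity) t2.ne', Real.log_exp] at hl
  unfold Z
  rw [Real.log_mul (by positivity) (hp0.trans_le hle).ne', Real.log_exp, one_div,
    le_inv_mul_iff₀ hNp]
  have : (N:ℝ) * (-(3/2)*μ + FF μ (m/(N:ℝ)) - (10 * log (2*(N:ℝ)+1) + 6) / (N:ℝ)) =
    N*(-(3/2)*μ + FF μ (m/(N:ℝ))) - (10 * log (2*(N:ℝ)+1) + 6) := by field_simp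
  rw [this]
  have := (abs_le.1 t1).1
  have hl0 : 0 ≤ log (2*(N:ℝ)+1) := Real.log_nonneg (by linarith)
  linarith

/-- Free energy in the elongated (supercritical) region μ₁ < log 6, in terms of the
unique solution β₀ of 6 h(β₀) exp(-μ₁) = 1. -/
theorem free_energy_elongated (μ₁ : ℝ) (hμ : μ₁ < Real.log 6)
    (β₀ : ℝ) (hβ₀ : β₀ ∈ Set.Ioo (0 : ℝ) 1) (hsol : 6 * h β₀ * Real.exp (-μ₁) = 1) :
    Filter.Tendsto (fun N : ℕ => (1 / (N : ℝ)) * Real.log (Z μ₁ N)) evenAtTop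
      (nhds (-(3 / 2) * μ₁ + (1 / 2) * Real.log (27 / 2) +
        (β₀ / 2) * (Real.log 6 - μ₁) + (1 / 2) * ∫ β in (0 : ℝ)..β₀, Real.log (h β))) := by
  rw [add_assoc, add_assoc, ← add_assoc (1/2 * Real.log (27/2)), ← FF_value μ₁ β₀ hβ₀]
  have hle : evenAtTop ≤ atTop := inf_le_left
  have hev : ∀ᶠ N in evenAtTop, Even N := by
    have : {N : ℕ | Even N} ∈ evenAtTop := mem_inf_of_right (mem_principal_self _)
    exact this
  have hb0 := hβ₀.1
  have hratio : Tendsto (fun N : ℕ => ((2 * ⌊(β₀/2) * (N:ℝ)⌋₊ : ℕ) : ℝ) / (N:ℝ)) atTop (nhds β₀) := by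
    have t := (tendsto_nat_floor_mul_div_atTop (R := ℝ) (a := β₀/2) (by positivity)).comp
      tendsto_natCast_atTop_atTop
    have t2 := t.const_mul 2
    have e : 2 * (β₀/2) = β₀ := by ring
    rw [e] at t2
    refine t2.congr fun N => ?_
    simp only [Function.comp]
    push_cast
    ring
  have hFF : Tendsto (fun N : ℕ => FF μ₁ (((2 * ⌊(β₀/2) * (N:ℝ)⌋₊ : ℕ) : ℝ) / (N:ℝ))) atTop
      (nhds (FF μ₁ β₀)) := ((FF_cont μ₁).tendsto β₀).comp hratio
  have hlow := ((tendsto_const_nhds (x := -(3/2)*μ₁)).add hFF).sub err_tendsto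
  have hup := (tendsto_const_nhds (x := -(3/2)*μ₁ + FF μ₁ β₀)).add err_tendsto
  rw [sub_zero] at hlow
  rw [add_zero] at hup
  refine tendsto_of_tendsto_of_tendsto_of_le_of_le' (hlow.mono_left hle) (hup.mono_left hle) ?_ ?_
  · have hbig : ∀ᶠ N : ℕ in atTop, 1 ≤ (β₀/2) * (N:ℝ) :=
      (tendsto_natCast_atTop_atTop.const_mul_atTop (by positivity : 0 < β₀/2)).eventually_ge_atTop 1
    filter_upwards [hev, hle hbig] with N hN hN1
    apply lower_bd μ₁ N _ hN (even_two_mul _)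
    · have : 1 ≤ ⌊(β₀/2) * (N:ℝ)⌋₊ := Nat.le_floor (by simpa using hN1)
      omega
    · have h1 : (⌊(β₀/2) * (N:ℝ)⌋₊ : ℝ) ≤ (β₀/2) * (N:ℝ) := Nat.floor_le (by linarith)
      have hNn : (0:ℝ) ≤ N := Nat.cast_nonneg N
      have h2 : ((2 * ⌊(β₀/2) * (N:ℝ)⌋₊ : ℕ) : ℝ) ≤ (N:ℝ) := by
        push_cast
        nlinarith [hβ₀.2]
      exact_mod_cast h2
  · filter_upwards [hev, hle (eventually_ge_atTop 2)] with N hN hN2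
    exact upper_bd μ₁ β₀ hβ₀ hsol N hN hN2
end

section
/- Critical phase, order √N: at the critical point μ₁ = log 6, for every δ > 0 there exists ε > 0 such that liminf_{N→∞, N even} P_{N, log 6}({m : ε·√N ≤ m ≤ ε^{−1}·√N}) ≥ 1 − δ; i.e. the boundary length is of order √N with probability tending to one. -/
open Filter Real MeasureTheory

/-- Weight of boundary length m: w_{μ₁}(N,m) = exp(-μ₁ m/2) C₀(N,m). -/
noncomputable def w (μ₁ : ℝ) (N m : ℕ) : ℝ := Real.exp (-μ₁ * m / 2) * C0 N m

/-- Normalizing constant Θ_N(μ₁) = Σ_{m even, 2 ≤ m ≤ N} w_{μ₁}(N,m). -/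
noncomputable def Θ (μ₁ : ℝ) (N : ℕ) : ℝ :=
  ∑ m ∈ (Finset.range (N + 1)).filter (fun m => Even m ∧ 2 ≤ m), w μ₁ N m

/-- Boundary-length distribution P_{N,μ₁}(m) = w_{μ₁}(N,m)/Θ_N(μ₁). -/
noncomputable def P (μ₁ : ℝ) (N m : ℕ) : ℝ := w μ₁ N m / Θ μ₁ N

noncomputable def aa (n k : ℕ) : ℝ := w (Real.log 6) (2 * n) (2 * k)

lemma exp_aux (k : ℕ) : Real.exp (-Real.log 6 * ((2 * k : ℕ) : ℝ) / 2) = (1 / 6 : ℝ) ^ k := by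
  have : -Real.log 6 * ((2 * k : ℕ) : ℝ) / 2 = k * (-Real.log 6) := by push_cast; ring
  rw [this, Real.exp_nat_mul, Real.exp_neg, Real.exp_log (by norm_num)]
  norm_num

lemma aa_pos (n k : ℕ) : 0 < aa n k := by
  unfold aa w C0
  positivity

lemma aa_form (p q : ℕ) : aa (p + 1 + q) (p + 1) = (1 / 6 : ℝ) ^ (p + 1) *
    ((2 : ℝ) ^ (q + 2) * ((4 * p + 3 * q + 3).factorial : ℝ) * ((4 * p + 1).factorial : ℝ) /
    (((q + 1).factorial : ℝ) * ((4 * p + 2 * q + 4).factorial : ℝ) *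
      ((2 * p).factorial : ℝ) ^ 2)) := by
  unfold aa w C0
  rw [exp_aux]
  have e1 : (2 * (p + 1 + q) - 2 * (p + 1)) / 2 = q := by omega
  rw [e1]
  have e2 : 2 * (2 * (p + 1)) + 3 * q - 1 = 4 * p + 3 * q + 3 := by omega
  have e3 : 2 * (2 * (p + 1)) - 3 = 4 * p + 1 := by omega
  have e4 : 2 * (2 * (p + 1)) + 2 * q = 4 * p + 2 * q + 4 := by omega
  have e5 : 2 * (p + 1) - 2 = 2 * p := by omega
  rw [e2, e3, e4, e5]

lemma ratio0 (p q : ℕ) : aa (p + 1 + (q + 1)) (p + 1 + 1) *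
      (3 * (2 * p + q + 4) * (4 * p + 2 * q + 7) * ((p + 1) * (2 * p + 1)) * 4) =
    aa (p + 1 + (q + 1)) (p + 1) *
      ((4 * p + 3 * q + 7) * (q + 2) * (4 * p + 5) * (4 * p + 3)) := by
  rw [aa_form p (q + 1), show p + 1 + (q + 1) = (p + 1) + 1 + q by ring, aa_form (p + 1) q]
  rw [show 4 * (p + 1) + 3 * q + 3 = (4 * p + 3 * q + 6) + 1 by ring,
    show 4 * p + 3 * (q + 1) + 3 = 4 * p + 3 * q + 6 by ring,
    show 4 * (p + 1) + 1 = 4 * p + 1 + 1 + 1 + 1 + 1 by ring,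
    show 4 * (p + 1) + 2 * q + 4 = 4 * p + 2 * q + 6 + 1 + 1 by ring,
    show 4 * p + 2 * (q + 1) + 4 = 4 * p + 2 * q + 6 by ring,
    show 2 * (p + 1) = 2 * p + 1 + 1 by ring]
  have h1 : ((4 * p + 3 * q + 6).factorial : ℝ) ≠ 0 := by positivity
  have h2 : ((4 * p + 1).factorial : ℝ) ≠ 0 := by positivity
  have h3 : ((4 * p + 2 * q + 6).factorial : ℝ) ≠ 0 := by positivity
  have h4 : ((2 * p).factorial : ℝ) ≠ 0 := by positivity
  have h5 : ((q + 1).factorial : ℝ) ≠ 0 := by positivity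
  simp only [Nat.factorial_succ (4 * p + 3 * q + 6), Nat.factorial_succ (4 * p + 1 + 1 + 1 + 1),
    Nat.factorial_succ (4 * p + 1 + 1 + 1), Nat.factorial_succ (4 * p + 1 + 1),
    Nat.factorial_succ (4 * p + 1), Nat.factorial_succ (4 * p + 2 * q + 6 + 1),
    Nat.factorial_succ (4 * p + 2 * q + 6), Nat.factorial_succ (2 * p + 1),
    Nat.factorial_succ (2 * p), Nat.factorial_succ (q + 1)]
  generalize (4 * p + 3 * q + 6).factorial = A at *
  generalize (4 * p + 1).factorial = B at *
  generalize (4 * p + 2 * q + 6).factorial = C at *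
  generalize (2 * p).factorial = D at *
  generalize (q + 1).factorial = E at *
  push_cast
  rw [pow_succ (1 / 6 : ℝ) (p + 1), pow_succ (2 : ℝ) (q + 2), pow_succ (2 : ℝ) (q + 1)]
  have i1 : (q + 1 + 1 : ℝ) ≠ 0 := by positivity
  have i2 : (4 * p + 2 * q + 6 + 1 : ℝ) ≠ 0 := by positivity
  have i3 : (4 * p + 2 * q + 6 + 1 + 1 : ℝ) ≠ 0 := by positivity
  have i4 : (2 * p + 1 : ℝ) ≠ 0 := by positivity
  have i5 : (2 * p + 1 + 1 : ℝ) ≠ 0 := by positivity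
  field_simp
  ring

lemma ratio (n k : ℕ) (hk : 1 ≤ k) (hkn : k < n) : aa n (k + 1) *
      (3 * (n + k + 1) * (2 * n + 2 * k + 1) * (k * (2 * k - 1)) * 4) =
    aa n k * ((3 * n + k) * (n - k + 1) * (16 * k ^ 2 - 1)) := by
  obtain ⟨p, rfl⟩ : ∃ p, k = p + 1 := ⟨k - 1, by omega⟩
  obtain ⟨q, rfl⟩ : ∃ q, n = p + 1 + (q + 1) := ⟨n - p - 2, by omega⟩
  have := ratio0 p q
  push_cast
  linear_combination this

lemma ratio_lo (n k : ℕ) (hk : 1 ≤ k) (hkn : k < n) :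
    (1 - 7 * (k : ℝ) / n) * aa n k ≤ aa n (k + 1) := by
  have h := ratio n k hk hkn
  have h0 := aa_pos n k
  have hk' : (1 : ℝ) ≤ k := by exact_mod_cast hk
  have hn' : (k : ℝ) + 1 ≤ n := by exact_mod_cast hkn
  generalize (k : ℝ) = x at *
  generalize (n : ℝ) = y at *
  have hx : 0 < x := by linarith
  have hy : 0 < y := by linarith
  have hD : 0 < 3 * (y + x + 1) * (2 * y + 2 * x + 1) * (x * (2 * x - 1)) * 4 := by
    have : 0 < 2 * x - 1 := by linarith
    positivity
  refine le_of_mul_le_mul_right ?_ hD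
  rw [h, mul_comm _ (aa n k), mul_assoc]
  refine mul_le_mul_of_nonneg_left ?_ h0.le
  have hy : 0 < y := by linarith
  have f1 : (1 - 7 * x / y) * (3 * (y + x + 1) * (2 * y + 2 * x + 1)) ≤
      2 * ((3 * y + x) * (y - x + 1)) := by
    have e : (1 - 7 * x / y) = (y - 7 * x) / y := by field_simp
    rw [e, div_mul_eq_mul_div, div_le_iff₀ hy]
    have p1 : 0 ≤ (x - 1) * (y * y) := by
      apply mul_nonneg; linarith; positivity
    have p2 : 0 ≤ (y - x - 1) * (x * y) := by
      apply mul_nonneg; linarith; positivity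
    have p3 : 0 ≤ (y - x - 1) * (y) := by
      apply mul_nonneg; linarith; positivity
    have p4 : 0 ≤ (x - 1) * (y) := by
      apply mul_nonneg; linarith; positivity
    have p5 : 0 ≤ x * x * y := by positivity
    have p6 : 0 ≤ x * x * x := by positivity
    have p7 : 0 ≤ (x - 1) * (x * y) := by
      apply mul_nonneg; linarith; positivity
    have p8 : 0 ≤ x * y * y := by positivity
    nlinarith
  have f2 : 8 * (x * (2 * x - 1)) ≤ 16 * x ^ 2 - 1 := by nlinarith
  have f3 : 0 ≤ (3 * y + x) * (y - x + 1) := by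
    apply mul_nonneg <;> linarith
  have f4 : 0 ≤ x * (2 * x - 1) := by apply mul_nonneg <;> linarith
  calc _ = (1 - 7 * x / y) * (3 * (y + x + 1) * (2 * y + 2 * x + 1)) * (x * (2 * x - 1)) * 4 := by
        ring
    _ ≤ 2 * ((3 * y + x) * (y - x + 1)) * (x * (2 * x - 1)) * 4 := by gcongr
    _ = (3 * y + x) * (y - x + 1) * (8 * (x * (2 * x - 1))) := by ring
    _ ≤ _ := by gcongr

lemma ratio_hi (n k : ℕ) (hk : 1 ≤ k) (hkn : k < n) :
    k * aa n (k + 1) ≤ (k + 1 - (k : ℝ) ^ 2 / (4 * n)) * aa n k := by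
  have h := ratio n k hk hkn
  have h0 := aa_pos n k
  have hk' : (1 : ℝ) ≤ k := by exact_mod_cast hk
  have hn' : (k : ℝ) + 1 ≤ n := by exact_mod_cast hkn
  generalize (k : ℝ) = x at *
  generalize (n : ℝ) = y at *
  have hx : 0 < x := by linarith
  have hy : 0 < y := by linarith
  have hD : 0 < 3 * (y + x + 1) * (2 * y + 2 * x + 1) * (x * (2 * x - 1)) * 4 := by
    have : 0 < 2 * x - 1 := by linarith
    positivity
  refine le_of_mul_le_mul_right ?_ hD
  rw [mul_assoc, h, mul_comm _ (aa n k), mul_assoc (aa n k), mul_left_comm]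
  refine mul_le_mul_of_nonneg_left ?_ h0.le
  have hy : 0 < y := by linarith
  have f1 : 2 * ((3 * y + x) * (y - x + 1)) ≤
      (1 - x / (4 * y)) * (3 * (y + x + 1) * (2 * y + 2 * x + 1)) := by
    have e : (1 - x / (4 * y)) = (4 * y - x) / (4 * y) := by field_simp
    rw [e, div_mul_eq_mul_div, le_div_iff₀ (by positivity)]
    have p2 : 0 ≤ (y - x - 1) * (x * y) := by
      apply mul_nonneg; linarith; positivity
    have p3 : 0 ≤ (y - x - 1) * (x * x) := by
      apply mul_nonneg; linarith; positivity
    have p4 : 0 ≤ (y - x - 1) * x := by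
      apply mul_nonneg; linarith; positivity
    have p5 : 0 ≤ x * y := by positivity
    have p8 : 0 ≤ x * y * y := by positivity
    have p9 : 0 ≤ y * y := by positivity
    nlinarith
  have f2 : x * (16 * x ^ 2 - 1) ≤ 8 * (x * (2 * x - 1)) * (x + 1) := by nlinarith
  have f3 : 0 ≤ (3 * y + x) * (y - x + 1) := by
    apply mul_nonneg <;> linarith
  have f4 : 0 ≤ x * (2 * x - 1) := by apply mul_nonneg <;> linarith
  have f5 : (1 - x / (4 * y)) * (x + 1) ≤ x + 1 - x ^ 2 / (4 * y) := by
    have : 0 ≤ x / (4 * y) := by positivity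
    have e : x ^ 2 / (4 * y) = x * (x / (4 * y)) := by ring
    rw [e]; nlinarith
  calc _ = (3 * y + x) * (y - x + 1) * (x * (16 * x ^ 2 - 1)) := by ring
    _ ≤ (3 * y + x) * (y - x + 1) * (8 * (x * (2 * x - 1)) * (x + 1)) := by gcongr
    _ = 2 * ((3 * y + x) * (y - x + 1)) * (4 * (x * (2 * x - 1)) * (x + 1)) := by ring
    _ ≤ (1 - x / (4 * y)) * (3 * (y + x + 1) * (2 * y + 2 * x + 1)) *
        (4 * (x * (2 * x - 1)) * (x + 1)) := by gcongr
    _ = (1 - x / (4 * y)) * (x + 1) * 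
        (3 * (y + x + 1) * (2 * y + 2 * x + 1) * (x * (2 * x - 1)) * 4) := by ring
    _ ≤ _ := by gcongr

noncomputable def TT (n : ℕ) : ℝ := ∑ k ∈ Finset.Icc 1 n, aa n k

lemma moment_aux (n M : ℕ) (hM : M + 1 ≤ n) :
    ∑ k ∈ Finset.Icc 1 M, (k : ℝ) ^ 2 / (4 * n) * aa n k + (M + 1) * aa n (M + 1) ≤
      2 * ∑ k ∈ Finset.Icc 1 M, aa n k + aa n (M + 1) := by
  induction M with
  | zero => simp
  | succ M ih =>
    rw [Finset.sum_Icc_succ_top (by omega), Finset.sum_Icc_succ_top (by omega)]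
    have := ih (by omega)
    have h2 := ratio_hi n (M + 1) (by omega) (by omega)
    push_cast at *
    linarith

lemma moment (n : ℕ) (hn : 1 ≤ n) :
    ∑ k ∈ Finset.Icc 1 n, (k : ℝ) ^ 2 * aa n k ≤ 8 * n * TT n := by
  obtain ⟨M, rfl⟩ : ∃ M, n = M + 1 := ⟨n - 1, by omega⟩
  have h := moment_aux (M + 1) M le_rfl
  have h0 := aa_pos (M + 1) (M + 1)
  have key : ∑ k ∈ Finset.Icc 1 (M + 1), (k : ℝ) ^ 2 / (4 * (M + 1 : ℕ)) * aa (M + 1) k ≤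
      2 * TT (M + 1) := by
    unfold TT
    rw [Finset.sum_Icc_succ_top (by omega), Finset.sum_Icc_succ_top (by omega)]
    have e : ((M + 1 : ℕ) : ℝ) ^ 2 / (4 * (M + 1 : ℕ)) * aa (M + 1) (M + 1) =
        ((M + 1 : ℕ) : ℝ) / 4 * aa (M + 1) (M + 1) := by field_simp
    rw [e]
    push_cast at *
    nlinarith [mul_nonneg (Nat.cast_nonneg (α := ℝ) M) h0.le]
  have hp : (0 : ℝ) < 4 * (M + 1 : ℕ) := by positivity
  calc _ = ((4 : ℝ) * (M + 1 : ℕ)) *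
        ∑ k ∈ Finset.Icc 1 (M + 1), (k : ℝ) ^ 2 / (4 * (M + 1 : ℕ)) * aa (M + 1) k := by
        rw [Finset.mul_sum]
        refine Finset.sum_congr rfl fun k _ => ?_
        field_simp
    _ ≤ ((4 : ℝ) * (M + 1 : ℕ)) * (2 * TT (M + 1)) := by gcongr
    _ = _ := by ring

lemma grow (n L k d : ℕ) (hk : 1 ≤ k) (hL : k + d ≤ L) (h14 : 14 * L ^ 2 ≤ n) :
    (1 - 7 * (d : ℝ) * L / n) * aa n k ≤ aa n (k + d) := by
  have hn : 0 < n := by nlinarith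
  have hn' : (0 : ℝ) < n := by exact_mod_cast hn
  induction d with
  | zero => simp
  | succ d ih =>
    have ih := ih (by omega)
    have hlt : k + d < n := by nlinarith
    have h := ratio_lo n (k + d) (by omega) hlt
    have h0 := aa_pos n k
    have hkL : ((k + d : ℕ) : ℝ) ≤ L := by exact_mod_cast (by omega : k + d ≤ L)
    have h14' : 14 * (L : ℝ) ^ 2 ≤ n := by exact_mod_cast h14
    have hL1 : (1 : ℝ) ≤ L := by exact_mod_cast (by omega : 1 ≤ L)
    set u : ℝ := 7 * L / n
    have hu0 : 0 ≤ u := by positivity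
    have hu : u ≤ 1 := by
      rw [div_le_one hn']; nlinarith
    have e1 : 7 * ((k + d : ℕ) : ℝ) / n ≤ u := by
      simp only [u]; gcongr
    have e2 : 7 * (d : ℝ) * L / n = d * u := by simp only [u]; ring
    have e3 : 7 * ((d + 1 : ℕ) : ℝ) * L / n = (d + 1) * u := by simp only [u]; push_cast; ring
    rw [e2] at ih
    rw [e3, ← add_assoc]
    calc (1 - (d + 1) * u) * aa n k ≤ (1 - u) * ((1 - d * u) * aa n k) := by
          have : 0 ≤ d * u * u * aa n k := by positivity
          nlinarith
      _ ≤ (1 - u) * aa n (k + d) := by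
          apply mul_le_mul_of_nonneg_left ih; linarith
      _ ≤ (1 - 7 * ((k + d : ℕ) : ℝ) / n) * aa n (k + d) := by
          apply mul_le_mul_of_nonneg_right _ (aa_pos _ _).le; linarith
      _ ≤ _ := h

lemma grow2 (n L k k' : ℕ) (hk : 1 ≤ k) (hkk : k ≤ k') (hL : k' ≤ L) (h14 : 14 * L ^ 2 ≤ n) :
    aa n k ≤ 2 * aa n k' := by
  obtain ⟨d, rfl⟩ := Nat.exists_eq_add_of_le hkk
  have h := grow n L k d hk hL h14
  have hn : 0 < n := by nlinarith
  have hn' : (0 : ℝ) < n := by exact_mod_cast hn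
  have h14' : 14 * (L : ℝ) ^ 2 ≤ n := by exact_mod_cast h14
  have hdL : (d : ℝ) ≤ L := by exact_mod_cast (by omega : d ≤ L)
  have : 7 * (d : ℝ) * L / n ≤ 1 / 2 := by
    rw [div_le_iff₀ hn']
    nlinarith [mul_le_mul_of_nonneg_right hdL (Nat.cast_nonneg (α := ℝ) L)]
  nlinarith [aa_pos n k]

lemma pointwise (n L k : ℕ) (hk : 1 ≤ k) (hkL : 2 * k ≤ L) (h14 : 14 * L ^ 2 ≤ n) :
    L * aa n k ≤ 4 * TT n := by
  have h1 : ∑ _i ∈ Finset.Icc k L, aa n k ≤ ∑ i ∈ Finset.Icc k L, 2 * aa n i := by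
    refine Finset.sum_le_sum fun i hi => ?_
    rw [Finset.mem_Icc] at hi
    exact grow2 n L k i hk hi.1 hi.2 h14
  have h2 : ∑ i ∈ Finset.Icc k L, aa n i ≤ TT n := by
    refine Finset.sum_le_sum_of_subset_of_nonneg ?_ fun i _ _ => (aa_pos n i).le
    apply Finset.Icc_subset_Icc hk
    nlinarith
  rw [Finset.sum_const, Nat.card_Icc, nsmul_eq_mul, ← Finset.mul_sum] at h1
  have h3 : (L : ℝ) ≤ 2 * ((L + 1 - k : ℕ) : ℝ) := by
    exact_mod_cast (by omega : L ≤ 2 * (L + 1 - k))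
  nlinarith [aa_pos n k]

lemma sum_even (n : ℕ) (Q : ℕ → Prop) [DecidablePred Q]
    [DecidablePred (fun m => Even m ∧ 2 ≤ m ∧ Q m)] (f : ℕ → ℝ) :
    ∑ m ∈ (Finset.range (2 * n + 1)).filter (fun m => Even m ∧ 2 ≤ m ∧ Q m), f m =
      ∑ k ∈ (Finset.Icc 1 n).filter (fun k => Q (2 * k)), f (2 * k) := by
  symm
  refine Finset.sum_bij (fun k _ => 2 * k) ?_ ?_ ?_ ?_
  · intro k hk
    simp only [Finset.mem_filter, Finset.mem_Icc, Finset.mem_range] at *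
    exact ⟨by omega, ⟨k, by omega⟩, by omega, hk.2⟩
  · intro a _ b _ h; simpa using h
  · intro m hm
    simp only [Finset.mem_filter, Finset.mem_Icc, Finset.mem_range] at *
    obtain ⟨h1, ⟨k, rfl⟩, h3, h4⟩ := hm
    exact ⟨k, ⟨⟨by omega, by omega⟩, by rwa [two_mul]⟩, by omega⟩
  · intros; rfl

lemma theta_eq (n : ℕ) : Θ (Real.log 6) (2 * n) = TT n := by
  have := sum_even n (fun _ => True) (w (Real.log 6) (2 * n))
  simp only [and_true, Finset.filter_true] at this
  unfold Θ TT aa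
  convert this using 2

lemma lower (n : ℕ) (hn : 14 ≤ n) (ε : ℝ) (h0 : 0 < ε) (h1 : ε ≤ 1 / 16) :
    ∑ k ∈ (Finset.Icc 1 n).filter (fun k : ℕ => (k : ℝ) < ε * √n), aa n k ≤ 32 * ε * TT n := by
  set L := Nat.sqrt (n / 14)
  have hL1 : 1 ≤ L := by
    rw [Nat.le_sqrt]; omega
  have hLa : L * L ≤ n / 14 := Nat.sqrt_le _
  have hLb : n / 14 < (L + 1) * (L + 1) := Nat.lt_succ_sqrt _
  have h14 : 14 * L ^ 2 ≤ n := by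
    have : 14 * (L * L) ≤ n := by omega
    nlinarith
  have h56 : n ≤ (8 * L) ^ 2 := by
    have : n < 14 * ((L + 1) * (L + 1)) := by omega
    nlinarith
  have hs : √(n : ℝ) ≤ 8 * L := by
    rw [Real.sqrt_le_left (by positivity)]
    exact_mod_cast h56
  have hT : 0 ≤ TT n := Finset.sum_nonneg fun i _ => (aa_pos n i).le
  have hL0 : (0 : ℝ) < L := by exact_mod_cast hL1
  have hpt : ∀ k ∈ (Finset.Icc 1 n).filter (fun k : ℕ => (k : ℝ) < ε * √n),
      aa n k ≤ 4 * TT n / L := by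
    intro k hk
    simp only [Finset.mem_filter, Finset.mem_Icc] at hk
    rw [le_div_iff₀ hL0, mul_comm]
    refine pointwise n L k hk.1.1 ?_ h14
    have : (2 * k : ℝ) ≤ L := by nlinarith [Real.sqrt_nonneg (n : ℝ)]
    exact_mod_cast this
  have hs0 := Real.sqrt_nonneg (n : ℝ)
  have hc : (((Finset.Icc 1 n).filter (fun k : ℕ => (k : ℝ) < ε * √n)).card : ℝ) ≤ ε * √n := by
    have hsub : (Finset.Icc 1 n).filter (fun k : ℕ => (k : ℝ) < ε * √n) ⊆
        Finset.Icc 1 ⌊ε * √n⌋₊ := by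
      intro k hk
      simp only [Finset.mem_filter, Finset.mem_Icc] at *
      exact ⟨hk.1.1, Nat.le_floor hk.2.le⟩
    have := Finset.card_le_card hsub
    rw [Nat.card_Icc, Nat.add_sub_cancel] at this
    calc _ ≤ ((⌊ε * √n⌋₊ : ℕ) : ℝ) := by exact_mod_cast this
      _ ≤ _ := Nat.floor_le (by positivity)
  calc _ ≤ _ := Finset.sum_le_card_nsmul _ _ _ hpt
    _ ≤ (ε * (8 * L)) * (4 * TT n / L) := by
        rw [nsmul_eq_mul]
        gcongr
        exact hc.trans (by gcongr)
    _ = _ := by field_simp; ring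

lemma upper (n : ℕ) (hn : 14 ≤ n) (ε : ℝ) (h0 : 0 < ε) :
    ∑ k ∈ (Finset.Icc 1 n).filter (fun k : ℕ => ε⁻¹ * √(2 * n) < 2 * (k : ℝ)), aa n k ≤
      16 * ε ^ 2 * TT n := by
  have hn0 : (0 : ℝ) < n := by positivity
  have h := moment n (by omega)
  have h2 : ∑ k ∈ (Finset.Icc 1 n).filter (fun k : ℕ => ε⁻¹ * √(2 * n) < 2 * (k : ℝ)), aa n k ≤
      ∑ k ∈ Finset.Icc 1 n, 2 * ε ^ 2 / n * ((k : ℝ) ^ 2 * aa n k) := by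
    refine (Finset.sum_le_sum fun k hk => ?_).trans
      (Finset.sum_le_sum_of_subset_of_nonneg (Finset.filter_subset _ _) ?_)
    · simp only [Finset.mem_filter] at hk
      have h3 : (ε⁻¹ * √(2 * n)) ^ 2 ≤ (2 * (k : ℝ)) ^ 2 := by
        have := hk.2
        gcongr
      rw [mul_pow, Real.sq_sqrt (by positivity)] at h3
      have h4 : 1 ≤ 2 * ε ^ 2 / n * (k : ℝ) ^ 2 := by
        rw [div_mul_eq_mul_div, le_div_iff₀ hn0]
        have := mul_le_mul_of_nonneg_left h3 (sq_nonneg ε)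
        have e : ε ^ 2 * (ε⁻¹ ^ 2 * (2 * n)) = 2 * n := by field_simp
        rw [e] at this
        nlinarith
      nlinarith [aa_pos n k]
    · intro i _ _
      have := aa_pos n i
      positivity
  rw [← Finset.mul_sum] at h2
  calc _ ≤ _ := h2
    _ ≤ 2 * ε ^ 2 / n * (8 * n * TT n) := by gcongr
    _ = _ := by field_simp; ring

lemma TT_pos (n : ℕ) (hn : 14 ≤ n) : 0 < TT n :=
  Finset.sum_pos (fun i _ => aa_pos n i) ⟨1, by simp; omega⟩

instance evenAtTop_neBot : evenAtTop.NeBot := by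
  unfold evenAtTop
  rw [← Filter.frequently_mem_iff_neBot, Filter.frequently_atTop]
  exact fun a => ⟨2 * a, by omega, by simp⟩

open scoped Classical

/-- Critical phase: at μ₁ = log 6 the boundary length is of order √N, i.e. for every
δ > 0 there is ε > 0 with liminf P(ε√N ≤ m ≤ ε⁻¹√N) ≥ 1 - δ along even N. -/
theorem critical_order_sqrt :
    ∀ δ : ℝ, 0 < δ → ∃ ε : ℝ, 0 < ε ∧
      1 - δ ≤
        Filter.liminf
          (fun N : ℕ =>
            ∑ m ∈ (Finset.range (N + 1)).filter
                (fun m : ℕ => Even m ∧ 2 ≤ m ∧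
                  ε * Real.sqrt N ≤ (m : ℝ) ∧ (m : ℝ) ≤ ε⁻¹ * Real.sqrt N),
              P (Real.log 6) N m)
          evenAtTop := by
  intro δ hδ
  obtain ⟨ε, h0, h1, h2⟩ : ∃ ε : ℝ, 0 < ε ∧ ε ≤ 1 / 16 ∧ 48 * ε ≤ δ :=
    ⟨min (1 / 16) (δ / 48), by positivity, min_le_left _ _, by
      have := min_le_right (1 / 16 : ℝ) (δ / 48); linarith⟩
  refine ⟨ε, h0, ?_⟩
  have hev : ∀ᶠ N in evenAtTop, ∃ n : ℕ, N = 2 * n ∧ 14 ≤ n := by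
    unfold evenAtTop
    rw [Filter.eventually_inf_principal]
    filter_upwards [Filter.eventually_ge_atTop 28] with N hN he
    obtain ⟨n, hn⟩ := he
    exact ⟨n, by omega, by omega⟩
  have hform : ∀ n : ℕ, ∑ m ∈ (Finset.range (2 * n + 1)).filter
                (fun m : ℕ => Even m ∧ 2 ≤ m ∧
                  ε * Real.sqrt (2 * n : ℕ) ≤ (m : ℝ) ∧ (m : ℝ) ≤ ε⁻¹ * Real.sqrt (2 * n : ℕ)),
              P (Real.log 6) (2 * n) m =
      (∑ k ∈ (Finset.Icc 1 n).filter (fun k : ℕ => ε * √((2 * n : ℕ) : ℝ) ≤ ((2 * k : ℕ) : ℝ) ∧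
        ((2 * k : ℕ) : ℝ) ≤ ε⁻¹ * √((2 * n : ℕ) : ℝ)), aa n k) / TT n := by
    intro n
    rw [sum_even n (fun m => ε * Real.sqrt (2 * n : ℕ) ≤ (m : ℝ) ∧
      (m : ℝ) ≤ ε⁻¹ * Real.sqrt (2 * n : ℕ)), Finset.sum_div]
    refine Finset.sum_congr rfl fun k _ => ?_
    unfold P
    rw [theta_eq]
    rfl
  refine Filter.le_liminf_of_le ?_ ?_
  · refine Filter.IsBoundedUnder.isCoboundedUnder_ge (Filter.isBoundedUnder_of_eventually_le (a := 1) ?_)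
    filter_upwards [hev] with N hN
    obtain ⟨n, rfl, hn⟩ := hN
    rw [hform, div_le_one (TT_pos n hn)]
    exact Finset.sum_le_sum_of_subset_of_nonneg (Finset.filter_subset _ _)
      fun i _ _ => (aa_pos n i).le
  · filter_upwards [hev] with N hN
    obtain ⟨n, rfl, hn⟩ := hN
    rw [hform, le_div_iff₀ (TT_pos n hn)]
    have hl := lower n hn ε h0 h1
    have hu := upper n hn ε h0
    have hT := TT_pos n hn
    have hsplit := Finset.sum_filter_add_sum_filter_not (Finset.Icc 1 n)
      (fun k : ℕ => ε * √((2 * n : ℕ) : ℝ) ≤ ((2 * k : ℕ) : ℝ) ∧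
        ((2 * k : ℕ) : ℝ) ≤ ε⁻¹ * √((2 * n : ℕ) : ℝ)) (aa n)
    have hbad : ∑ k ∈ (Finset.Icc 1 n).filter (fun k : ℕ =>
        ¬ (ε * √((2 * n : ℕ) : ℝ) ≤ ((2 * k : ℕ) : ℝ) ∧
        ((2 * k : ℕ) : ℝ) ≤ ε⁻¹ * √((2 * n : ℕ) : ℝ))), aa n k ≤
        ∑ k ∈ (Finset.Icc 1 n).filter (fun k : ℕ => (k : ℝ) < ε * √n), aa n k +
        ∑ k ∈ (Finset.Icc 1 n).filter (fun k : ℕ => ε⁻¹ * √(2 * n) < 2 * (k : ℝ)), aa n k := by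
      rw [← Finset.sum_union_inter]
      refine (Finset.sum_le_sum_of_subset_of_nonneg ?_ fun i _ _ => (aa_pos n i).le).trans
        (le_add_of_nonneg_right (Finset.sum_nonneg fun i _ => (aa_pos n i).le))
      intro k hk
      simp only [Finset.mem_union, Finset.mem_filter, not_and_or, not_le] at *
      push_cast at hk
      rcases hk with ⟨hk, h | h⟩
      · left
        refine ⟨hk, ?_⟩
        have : √(2 * (n : ℝ)) ≤ 2 * √n := by
          rw [Real.sqrt_le_left (by positivity), mul_pow, Real.sq_sqrt (by positivity)]
          nlinarith [Nat.cast_nonneg (α := ℝ) n]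
        nlinarith
      · right; exact ⟨hk, h⟩
    change _ = TT n at hsplit
    have : 16 * ε ^ 2 * TT n ≤ 16 * ε * TT n := by
      gcongr; nlinarith
    have h3 : 48 * ε * TT n ≤ δ * TT n := by gcongr
    linarith
end
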